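/- For any β,γ ∈ ℝ with β²+γ² > 0 there exist constants c_{γ,β} > 0, λ > 0, M > 0 and ε₀ > 0 such that for every 0 < ε ≤ ε₀ there exist a real-analytic function Ψ_ε on S² and a real-analytic function F_ε : ℝ → ℝ satisfying ΔΨ_ε − 4γY₁⁰ = F_ε(Ψ_ε) on S², ‖βY₂⁰ + γY₁⁰ − Ψ_ε‖_{G_λ} ≤ Mε, and whose coefficients satisfy |⟨Ψ_ε,Y₆²⟩ + β²·(1/36)·(45/(11π√182))·c_{γ,β}·ε²| ≤ Mε³ and |⟨Ψ_ε,Y₄²⟩ + (1/14)·((3√3/(154π))(11γ² − 5β²) − β²·(1/(7π))·(30γ²/(7γ²+15β²)))·c_{γ,β}·ε²| ≤ Mε³. In particular Ψ_ε is non-zonal and is not of the form (zonal function) + (element of span{Y₂^m : |m| ≤ 2}). -/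

import Mathlib

open MeasureTheory
open scoped ENNReal

noncomputable section

/-- Functions on the unit sphere, represented in colatitude-longitude coordinates `(θ, φ)`. -/
abbrev SphereFun : Type := ℝ → ℝ → ℝ

/-- The `L²` inner product on the sphere:
`⟨u,v⟩ = ∫₀^{2π} ∫₀^π u v sin θ dθ dφ`. -/
def sInner (u v : SphereFun) : ℝ :=
  ∫ φ in (0:ℝ)..(2*Real.pi), ∫ θ in (0:ℝ)..Real.pi, u θ φ * v θ φ * Real.sin θ

/-- Legendre polynomials via Rodrigues' formula. -/
def legP (n : ℕ) (s : ℝ) : ℝ :=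
  (1 / ((2:ℝ)^n * (Nat.factorial n : ℝ))) * iteratedDeriv n (fun x : ℝ => (x^2 - 1)^n) s

/-- Associated Legendre functions `P_n^m`. -/
def assocLegP (n m : ℕ) (s : ℝ) : ℝ :=
  (-1 : ℝ)^m * (1 - s^2) ^ ((m : ℝ)/2) * iteratedDeriv m (legP n) s

/-- Real spherical harmonics `Y_n^m`. -/
def Ynm (n : ℕ) (m : ℤ) : SphereFun := fun θ φ =>
  if m = 0 then
    Real.sqrt ((2*(n:ℝ)+1)/(4*Real.pi)) * legP n (Real.cos θ)
  else if 0 < m then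
    (-1 : ℝ)^(m.natAbs) * Real.sqrt 2 *
      Real.sqrt ((2*(n:ℝ)+1)/(4*Real.pi) *
        ((Nat.factorial (n - m.natAbs) : ℝ) / (Nat.factorial (n + m.natAbs) : ℝ))) *
      assocLegP n m.natAbs (Real.cos θ) * Real.cos ((m.natAbs : ℝ) * φ)
  else
    (-1 : ℝ)^(m.natAbs) * Real.sqrt 2 *
      Real.sqrt ((2*(n:ℝ)+1)/(4*Real.pi) *
        ((Nat.factorial (n - m.natAbs) : ℝ) / (Nat.factorial (n + m.natAbs) : ℝ))) *
      assocLegP n m.natAbs (Real.cos θ) * Real.sin ((m.natAbs : ℝ) * φ)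

/-- The spherical-harmonic coefficient `u_n^m = ⟨u, Y_n^m⟩`. -/
def coeff (u : SphereFun) (n : ℕ) (m : ℤ) : ℝ := sInner u (Ynm n m)

/-- `μ_n = n(n+1) + 1`. -/
def muSp (n : ℕ) : ℝ := (n:ℝ)*((n:ℝ)+1)+1

/-- Squared (inhomogeneous) Sobolev norm `‖u‖²_{H^k} = Σ μ_n^k |u_n^m|²`. -/
def sobNormSq (k : ℕ) (u : SphereFun) : ℝ≥0∞ :=
  ∑' p : ℕ × ℤ, if |p.2| ≤ (p.1 : ℤ) then
    ENNReal.ofReal ((muSp p.1)^k * (coeff u p.1 p.2)^2) else 0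

/-- Squared homogeneous Sobolev norm `‖u‖²_{Ḣ^k} = Σ_{n ≥ 1} λ_n^k |u_n^m|²`. -/
def dotNormSq (k : ℕ) (u : SphereFun) : ℝ≥0∞ :=
  ∑' p : ℕ × ℤ, if 1 ≤ p.1 ∧ |p.2| ≤ (p.1 : ℤ) then
    ENNReal.ofReal (((p.1:ℝ)*((p.1:ℝ)+1))^k * (coeff u p.1 p.2)^2) else 0

/-- Squared Gevrey norm `‖u‖²_{G_λ} = Σ_{n ≥ 1} μ_n² e^{2λ√μ_n} |u_n^m|²`. -/
def gevNormSq (lam : ℝ) (u : SphereFun) : ℝ≥0∞ :=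
  ∑' p : ℕ × ℤ, if 1 ≤ p.1 ∧ |p.2| ≤ (p.1 : ℤ) then
    ENNReal.ofReal ((muSp p.1)^2 * Real.exp (2*lam*Real.sqrt (muSp p.1)) *
      (coeff u p.1 p.2)^2) else 0

/-- `∂_θ`. -/
def dTheta (u : SphereFun) : SphereFun := fun θ φ => deriv (fun t => u t φ) θ

/-- `∂_φ`. -/
def dPhi (u : SphereFun) : SphereFun := fun θ φ => deriv (fun p => u θ p) φ

/-- The Laplace–Beltrami operator in colatitude-longitude coordinates:
`Δu = (1/sinθ)∂_θ(sinθ ∂_θu) + (1/sin²θ)∂²_φu`. -/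
def lapS (u : SphereFun) : SphereFun := fun θ φ =>
  (1 / Real.sin θ) * deriv (fun t => Real.sin t * dTheta u t φ) θ
  + (1 / (Real.sin θ)^2) * dPhi (dPhi u) θ φ

/-- A zonal function: one depending only on the colatitude `θ`. -/
def Zonal (u : SphereFun) : Prop := ∀ (θ φ₁ φ₂ : ℝ), u θ φ₁ = u θ φ₂

/-- Zonal on the coordinate chart `θ ∈ [0, π]`. -/
def ZonalOn (u : SphereFun) : Prop :=
  ∀ θ ∈ Set.Icc (0:ℝ) Real.pi, ∀ (φ₁ φ₂ : ℝ), u θ φ₁ = u θ φ₂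

/-- `2π`-periodicity in the longitude. -/
def PeriodicPhi (u : SphereFun) : Prop := ∀ θ φ, u θ (φ + 2*Real.pi) = u θ φ

/-- The advection term `U·∇f` for the velocity `U = ∇⊥Ψ`, i.e.
`(1/sinθ)∂_φΨ ∂_θf − ∂_θΨ (1/sinθ)∂_φf`. -/
def advect (Ψ f : SphereFun) : SphereFun := fun θ φ =>
  (1 / Real.sin θ) * dPhi Ψ θ φ * dTheta f θ φ
  - dTheta Ψ θ φ * ((1 / Real.sin θ) * dPhi f θ φ)

/-- Smoothness in the coordinates. -/
def SphSmooth (u : SphereFun) : Prop := ContDiff ℝ (⊤ : ℕ∞) (Function.uncurry u)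

/-- A function is trivial if it is a zonal function plus an element of
`span{Y₂^m : |m| ≤ 2}`; non-triviality is the negation of this. -/
def SphNontrivial (u : SphereFun) : Prop :=
  ¬ ∃ (z : SphereFun) (c : ℤ → ℝ), Zonal z ∧
      ∀ θ ∈ Set.Icc (0:ℝ) Real.pi, ∀ φ : ℝ,
        u θ φ = z θ φ + ∑ m ∈ Finset.Icc (-2 : ℤ) 2, c m * Ynm 2 m θ φ

/-- Real analyticity on the sphere, characterized by membership in a Gevrey class. -/
def RealAnalyticSphere (u : SphereFun) : Prop := ∃ lam > 0, gevNormSq lam u < ⊤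

/-!
On the profile `ψ₀ = G cos θ + B (3 cos² θ - 1)` the operator `Δψ - 4 G cos θ` takes the value
`-6 ψ₀`, and harmonics of degree `2` lie in the kernel of `Δ + 6`. Look for
`Ψ = ψ₀ + ε (sin² θ cos 2φ + w)` with `F t = -6 t + ε (c₁ s + c₂ s² + c₃ s³ + c₄ s⁴)`, `s = t + B`.
After division by `ε` the equation becomes `(Δ + 6) w = c₁ s + c₂ s² + c₃ s³ + c₄ s⁴` with
`s = Ψ + B`.

Everything is expanded in the two variables `cos θ / 64` and `ε sin² θ cos 2φ`, with coefficients in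
the convolution algebra `ℓ¹(ℕ × ℕ)`. Since the longitude enters only through the second variable,
the limit `ε → 0` still records the leading order of the azimuthal modes. On monomials, `Δ + 6` is
triangular, and it degenerates exactly in degree `2`. The two solvability conditions, one for each
monomial of degree `2`, are met by adjusting `c₁` and `c₂`, and the implicit function theorem gives
a solution for small `ε`. The remaining parameters `c₃` and `c₄` prescribe the coefficients
`⟨Ψ, Y₄²⟩` and `⟨Ψ, Y₆²⟩` to order `ε²`. Elements of the algebra represent functions whose harmonic
coefficients decay like `16⁻ⁿ`, which gives the Gevrey estimate. Finally, zonal functions and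
harmonics of degree `2` have no `(n, 2)` coefficients for `n > 2`.
-/

/-- The Banach space `ℓ¹(M)`. For an additive commutative monoid `M` it carries the convolution
product, so that it completes the real monoid algebra of `M`. -/
def ConvAlg (M : Type*) : Type _ := lp (fun _ : M => ℝ) 1

namespace ConvAlg

section Space

variable {M : Type*}

instance : NormedAddCommGroup (ConvAlg M) :=
  inferInstanceAs (NormedAddCommGroup (lp (fun _ : M => ℝ) 1))

instance : NormedSpace ℝ (ConvAlg M) := inferInstanceAs (NormedSpace ℝ (lp (fun _ : M => ℝ) 1))

instance : CompleteSpace (ConvAlg M) := inferInstanceAs (CompleteSpace (lp (fun _ : M => ℝ) 1))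

instance : CoeFun (ConvAlg M) fun _ => M → ℝ := ⟨fun a => (show lp (fun _ : M => ℝ) 1 from a)⟩

theorem hasSum_abs (a : ConvAlg M) : HasSum (fun p => |a p|) ‖a‖ := by
  have h := lp.hasSum_norm (E := fun _ : M => ℝ) (p := 1) (by simp) a
  simp only [ENNReal.toReal_one, Real.rpow_one] at h
  exact h

variable {X : Type*} [NormedAddCommGroup X] [NormedSpace ℝ X]

theorem norm_smul_le_mul_abs {x : M → X} {C : ℝ} (h : ∀ p, ‖x p‖ ≤ C) (a : ConvAlg M) (p : M) :
    ‖a p • x p‖ ≤ C * |a p| := by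
  rw [norm_smul, Real.norm_eq_abs, mul_comm]
  exact mul_le_mul_of_nonneg_right (h p) (abs_nonneg _)

theorem summable_smul [CompleteSpace X] {x : M → X} {C : ℝ} (h : ∀ p, ‖x p‖ ≤ C)
    (a : ConvAlg M) : Summable fun p => a p • x p :=
  .of_norm_bounded (a.hasSum_abs.summable.mul_left C) (norm_smul_le_mul_abs h a)

/-- The continuous linear map on `ℓ¹(M)` with prescribed bounded values on the unit vectors. -/
def lift [CompleteSpace X] (x : M → X) (C : ℝ) (h : ∀ p, ‖x p‖ ≤ C) : ConvAlg M →L[ℝ] X :=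
  LinearMap.mkContinuous
    { toFun := fun a => ∑' p, a p • x p
      map_add' := fun a b =>
        (tsum_congr fun p => add_smul (a p) (b p) (x p)).trans
          ((summable_smul h a).tsum_add (summable_smul h b))
      map_smul' := fun c a =>
        (tsum_congr fun p => mul_smul c (a p) (x p)).trans
          ((summable_smul h a).tsum_const_smul c) } C
    fun a => tsum_of_norm_bounded (a.hasSum_abs.mul_left C) (norm_smul_le_mul_abs h a)

theorem norm_lift_le [CompleteSpace X] [Nonempty M] {x : M → X} {C : ℝ} (h : ∀ p, ‖x p‖ ≤ C) :
    ‖lift x C h‖ ≤ C :=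
  LinearMap.mkContinuous_norm_le _ ((norm_nonneg _).trans (h (Classical.arbitrary M))) _

variable [DecidableEq M]

/-- The unit vector of `ℓ¹(M)` at `p`. -/
def single (p : M) : ConvAlg M := (lp.single 1 p (1 : ℝ) : lp (fun _ : M => ℝ) 1)

@[simp] theorem norm_single (p : M) : ‖single p‖ = 1 :=
  (lp.norm_single (E := fun _ : M => ℝ) (p := 1) (by norm_num) p (1 : ℝ)).trans norm_one

theorem hasSum_smul_single (a : ConvAlg M) : HasSum (fun p => a p • single p) a := by
  have h := lp.hasSum_single (E := fun _ : M => ℝ) (p := 1) (by simp) a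
  refine h.congr_fun fun p => ?_
  have hp := lp.single_smul (E := fun _ : M => ℝ) (𝕜 := ℝ) 1 p (a p) (1 : ℝ)
  rw [smul_eq_mul, mul_one] at hp
  exact hp.symm

theorem ext_single {f g : ConvAlg M →L[ℝ] X} (h : ∀ p, f (single p) = g (single p)) : f = g := by
  ext a
  have hf := f.hasSum (hasSum_smul_single a)
  have hg := g.hasSum (hasSum_smul_single a)
  simp only [map_smul, h] at hf hg
  exact hf.unique hg

variable [CompleteSpace X]

@[simp] theorem lift_single (x : M → X) (C : ℝ) (h : ∀ p, ‖x p‖ ≤ C) (p : M) :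
    lift x C h (single p) = x p := by
  refine (tsum_eq_single p fun q hq => ?_).trans ?_
  · simp [single, hq]
  · simp [single]

theorem opNorm_le_of_single [Nonempty M] {f : ConvAlg M →L[ℝ] X} {C : ℝ}
    (h : ∀ p, ‖f (single p)‖ ≤ C) : ‖f‖ ≤ C := by
  have hf : f = lift (fun p => f (single p)) C h := ext_single fun p => by simp
  exact hf ▸ norm_lift_le h

/-- The pairing `⟨a, b⟩ = ∑ a_p b_p` on `ℓ¹(M)`. -/
def pairing : ConvAlg M →L[ℝ] ConvAlg M →L[ℝ] ℝ :=
  have bound (p q : M) : ‖if p = q then (1 : ℝ) else 0‖ ≤ 1 := by split_ifs <;> simp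
  lift (fun p => lift (fun q => if p = q then 1 else 0) 1 (bound p)) 1 fun p =>
    have : Nonempty M := ⟨p⟩
    opNorm_le_of_single fun q => by simpa using bound p q

@[simp] theorem pairing_single (p q : M) :
    pairing (single p) (single q) = if p = q then 1 else 0 := by simp [pairing]

end Space

variable {M : Type*} [AddCommMonoid M] [DecidableEq M]

/-- The convolution product of `ℓ¹(M)`, as a bounded bilinear map. -/
def conv : ConvAlg M →L[ℝ] ConvAlg M →L[ℝ] ConvAlg M :=
  lift (fun p => lift (fun q => single (p + q)) 1 fun _ => (norm_single _).le) 1 fun _ =>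
    opNorm_le_of_single fun _ => by simp

@[simp] theorem conv_single (p q : M) : conv (single p) (single q) = single (p + q) := by
  simp [conv]

theorem conv_comm (a b : ConvAlg M) : conv a b = conv b a := by
  have h : conv = (conv (M := M)).flip :=
    ext_single fun p => ext_single fun q => by simp [add_comm]
  exact congr($h a b)

theorem conv_assoc (a b c : ConvAlg M) : conv (conv a b) c = conv a (conv b c) := by
  have hc (p q : M) : conv (conv (single p) (single q)) c = conv (single p) (conv (single q) c) :=
    have h : conv (conv (single p) (single q)) = (conv (single p)).comp (conv (single q)) :=
      ext_single fun r => by simp [add_assoc]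
    congr($h c)
  have hb (p : M) : conv (conv (single p) b) c = conv (single p) (conv b c) :=
    have h : (conv.flip c).comp (conv (single p)) = (conv (single p)).comp (conv.flip c) :=
      ext_single fun q => by simpa using hc p q
    congr($h b)
  have h : (conv.flip c).comp (conv.flip b) = conv.flip (conv b c) :=
    ext_single fun p => by simpa using hb p
  exact congr($h a)

theorem conv_single_zero (a : ConvAlg M) : conv (single 0) a = a := by
  have h : conv (single (0 : M)) = .id ℝ _ := ext_single fun q => by simp
  exact congr($h a)

theorem norm_conv_le (a b : ConvAlg M) : ‖conv a b‖ ≤ ‖a‖ * ‖b‖ := by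
  have h : ‖conv (M := M)‖ ≤ 1 :=
    opNorm_le_of_single fun p => opNorm_le_of_single fun q => by simp
  calc ‖conv a b‖ ≤ ‖conv (M := M)‖ * ‖a‖ * ‖b‖ := conv.le_opNorm₂ a b
    _ ≤ 1 * ‖a‖ * ‖b‖ := by gcongr
    _ = ‖a‖ * ‖b‖ := by rw [one_mul]

instance : NormedCommRing (ConvAlg M) :=
  { (inferInstance : NormedAddCommGroup (ConvAlg M)) with
    mul := fun a b => conv a b
    one := single 0
    mul_assoc := conv_assoc
    one_mul := conv_single_zero
    mul_one := fun a => (conv_comm a _).trans (conv_single_zero a)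
    left_distrib := fun a b c => (conv a).map_add b c
    right_distrib := fun a b c => conv.map_add₂ a b c
    zero_mul := fun a => conv.map_zero₂ a
    mul_zero := fun a => (conv a).map_zero
    mul_comm := conv_comm
    norm_mul_le := norm_conv_le }

instance : NormedAlgebra ℝ (ConvAlg M) where
  toAlgebra :=
    Algebra.ofModule (fun r a b => conv.map_smul₂ r a b) fun r a b => (conv a).map_smul r b
  norm_smul_le := norm_smul_le

theorem conv_eq_mul (a b : ConvAlg M) : conv a b = a * b := rfl

theorem one_eq_single : (1 : ConvAlg M) = single 0 := rfl

@[simp] theorem single_mul_single (p q : M) : single p * single q = single (p + q) :=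
  conv_single p q

@[simp] theorem single_pow (p : M) (k : ℕ) : single p ^ k = single (k • p) := by
  induction k with
  | zero => rw [pow_zero, zero_smul, one_eq_single]
  | succ k ih => rw [pow_succ, ih, single_mul_single, succ_nsmul]

theorem map_mul_of_single {f : ConvAlg M →L[ℝ] ℝ}
    (h : ∀ p q, f (single (p + q)) = f (single p) * f (single q)) (a b : ConvAlg M) :
    f (a * b) = f a * f b := by
  have hb (p : M) : f (conv (single p) b) = f (single p) * f b :=
    have h' : f.comp (conv (single p)) = f (single p) • f := ext_single fun q => by simp [h]
    congr($h' b)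
  have h' : f.comp (conv.flip b) = f b • f :=
    ext_single fun p => by simpa [mul_comm] using hb p
  simpa [conv_eq_mul, mul_comm] using congr($h' a)

end ConvAlg

/-! ### Convolution series on the sphere -/

section VectorValued

variable {E : Type*} [NormedAddCommGroup E] [NormedSpace ℝ E]

theorem deriv_fun_clm_apply {f : ℝ → E} (hf : Differentiable ℝ f) (L : E →L[ℝ] ℝ) :
    (deriv fun t => L (f t)) = fun t => L (deriv f t) :=
  funext fun t => (L.hasFDerivAt.comp_hasDerivAt t (hf t).hasDerivAt).deriv

theorem exists_lapS_clm_eq {G : ℝ × ℝ → E} (hG : ContDiff ℝ 2 G) (θ φ : ℝ) :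
    ∃ w : E, ∀ L : E →L[ℝ] ℝ, lapS (fun t p => L (G (t, p))) θ φ = L w := by
  have hθ : ContDiff ℝ 2 fun t => G (t, φ) := by fun_prop
  have hφ : ContDiff ℝ 2 fun p => G (θ, p) := by fun_prop
  have hφ' : ContDiff ℝ 1 (deriv fun p => G (θ, p)) := hφ.deriv' (n := 1)
  have hθ' : ContDiff ℝ 1 fun t => Real.sin t • deriv (fun t => G (t, φ)) t :=
    Real.contDiff_sin.smul (hθ.deriv' (n := 1))
  refine ⟨(1 / Real.sin θ) • deriv (fun t => Real.sin t • deriv (fun t => G (t, φ)) t) θ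
    + (1 / Real.sin θ ^ 2) • deriv (deriv fun p => G (θ, p)) φ, fun L => ?_⟩
  simp only [lapS, dTheta, dPhi, deriv_fun_clm_apply (hθ.differentiable two_ne_zero),
    ← smul_eq_mul (Real.sin _), ← map_smul, deriv_fun_clm_apply (hθ'.differentiable one_ne_zero),
    deriv_fun_clm_apply (hφ.differentiable two_ne_zero),
    deriv_fun_clm_apply (hφ'.differentiable one_ne_zero), map_add]
  simp

end VectorValued

namespace ConvAlg

/-- The generating element `∑ x ^ i * y ^ j • single (i, j)`: pairing with it evaluates a power
series in two variables at `(x, y)`. It is encoded as `(1 - x X)⁻¹ (1 - y Y)⁻¹`, so that its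
smoothness in `x` and `y` is that of inversion in a Banach algebra. -/
def genSeries (x y : ℝ) : ConvAlg (ℕ × ℕ) :=
  Ring.inverse (1 - x • single (1, 0)) * Ring.inverse (1 - y • single (0, 1))

theorem norm_smul_single_lt_one {M : Type*} [DecidableEq M] {x : ℝ} (hx : |x| < 1) (p : M) :
    ‖x • single p‖ < 1 := by
  rwa [norm_smul, norm_single, mul_one]

theorem pairing_single_genSeries {x y : ℝ} (hx : |x| < 1) (hy : |y| < 1) (p : ℕ × ℕ) :
    pairing (single p) (genSeries x y) = x ^ p.1 * y ^ p.2 := by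
  have hX := norm_smul_single_lt_one hx ((1, 0) : ℕ × ℕ)
  have hY := norm_smul_single_lt_one hy ((0, 1) : ℕ × ℕ)
  have hXY := (hasSum_geom_series_inverse _ hX).mul (hasSum_geom_series_inverse _ hY)
    (summable_mul_of_summable_norm (summable_norm_geometric_of_norm_lt_one hX)
      (summable_norm_geometric_of_norm_lt_one hY))
  refine ((pairing (single p)).hasSum hXY).unique ?_
  convert hasSum_ite_eq p (x ^ p.1 * y ^ p.2) using 2 with q
  simp only [smul_pow, single_pow, smul_mul_smul_comm, single_mul_single, map_smul, smul_eq_mul]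
  rcases eq_or_ne q p with rfl | h
  · simp
  · simp [h, h.symm]

theorem contDiffAt_inverse_one_sub_smul_single {x : ℝ} (hx : |x| < 1) (p : ℕ × ℕ) :
    ContDiffAt ℝ (⊤ : ℕ∞) (fun t : ℝ => Ring.inverse (1 - t • single p)) x := by
  have h := contDiffAt_ringInverse ℝ (n := (⊤ : ℕ∞))
    (Units.oneSub (x • single p) (norm_smul_single_lt_one hx p))
  exact h.comp x (by fun_prop : ContDiffAt ℝ _ (fun t : ℝ => 1 - t • single p) x)

theorem contDiffAt_genSeries {x y : ℝ} (hx : |x| < 1) (hy : |y| < 1) :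
    ContDiffAt ℝ (⊤ : ℕ∞) (Function.uncurry genSeries) (x, y) :=
  ((contDiffAt_inverse_one_sub_smul_single hx _).comp (x, y) contDiffAt_fst).mul
    ((contDiffAt_inverse_one_sub_smul_single hy _).comp (x, y) contDiffAt_snd)

/-- The point of the algebra at which series are evaluated to give functions on the sphere, the
two variables being `cos θ / 64` and `ε sin² θ cos 2φ`. The factor `64` leaves room for the
exponential growth of the crude bound `|Y_n^m| ≤ (n + 1) 8 ^ n`. -/
def spherePoint (ε : ℝ) (q : ℝ × ℝ) : ConvAlg (ℕ × ℕ) :=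
  genSeries (Real.cos q.1 / 64) (ε * Real.sin q.1 ^ 2 * Real.cos (2 * q.2))

/-- The function on the sphere represented by a convolution series. -/
def toSphere (ε : ℝ) (a : ConvAlg (ℕ × ℕ)) : SphereFun := fun θ φ =>
  pairing a (spherePoint ε (θ, φ))

theorem abs_cos_div_lt_one (θ : ℝ) : |Real.cos θ / 64| < 1 := by
  rw [abs_div, abs_of_pos (by norm_num : (0 : ℝ) < 64)]
  linarith [Real.abs_cos_le_one θ]

theorem abs_mul_sin_sq_mul_cos_le (ε θ φ : ℝ) :
    |ε * Real.sin θ ^ 2 * Real.cos (2 * φ)| ≤ |ε| := by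
  rw [abs_mul, abs_mul, abs_pow, mul_assoc]
  exact mul_le_of_le_one_right (abs_nonneg _) (mul_le_one₀
    (pow_le_one₀ (abs_nonneg _) (Real.abs_sin_le_one θ)) (abs_nonneg _) (Real.abs_cos_le_one _))

variable {ε : ℝ}

theorem toSphere_single (hε : |ε| < 1) (p : ℕ × ℕ) (θ φ : ℝ) :
    toSphere ε (single p) θ φ
      = (Real.cos θ / 64) ^ p.1 * (ε * Real.sin θ ^ 2 * Real.cos (2 * φ)) ^ p.2 :=
  pairing_single_genSeries (abs_cos_div_lt_one θ)
    ((abs_mul_sin_sq_mul_cos_le ε θ φ).trans_lt hε) p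

theorem contDiff_spherePoint (hε : |ε| < 1) : ContDiff ℝ (⊤ : ℕ∞) (spherePoint ε) :=
  contDiff_iff_contDiffAt.2 fun q =>
    (contDiffAt_genSeries (abs_cos_div_lt_one q.1)
      ((abs_mul_sin_sq_mul_cos_le ε q.1 q.2).trans_lt hε)).comp (g := Function.uncurry genSeries)
      (f := fun q : ℝ × ℝ =>
        (Real.cos q.1 / 64, ε * Real.sin q.1 ^ 2 * Real.cos (2 * q.2))) q (by fun_prop)

theorem sphSmooth_toSphere (hε : |ε| < 1) (a : ConvAlg (ℕ × ℕ)) : SphSmooth (toSphere ε a) :=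
  (pairing a).contDiff.comp (contDiff_spherePoint hε)

theorem periodicPhi_toSphere (ε : ℝ) (a : ConvAlg (ℕ × ℕ)) : PeriodicPhi (toSphere ε a) := by
  intro θ φ
  have h : Real.cos (2 * (φ + 2 * Real.pi)) = Real.cos (2 * φ) := by
    simpa [mul_add] using Real.cos_add_nat_mul_two_pi (2 * φ) 2
  simp only [toSphere, spherePoint, h]

theorem toSphere_mul (hε : |ε| < 1) (a b : ConvAlg (ℕ × ℕ)) (θ φ : ℝ) :
    toSphere ε (a * b) θ φ = toSphere ε a θ φ * toSphere ε b θ φ := by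
  refine map_mul_of_single (f := pairing.flip (spherePoint ε (θ, φ))) (fun p q => ?_) a b
  change toSphere ε (single (p + q)) θ φ = toSphere ε (single p) θ φ * toSphere ε (single q) θ φ
  simp only [toSphere_single hε, Prod.fst_add, Prod.snd_add, pow_add]
  ring

theorem exists_lapS_toSphere_eq (hε : |ε| < 1) (θ φ : ℝ) :
    ∃ L : ConvAlg (ℕ × ℕ) →L[ℝ] ℝ, ∀ a, lapS (toSphere ε a) θ φ = L a := by
  obtain ⟨w, hw⟩ := exists_lapS_clm_eq
    ((contDiff_spherePoint hε).of_le (WithTop.coe_le_coe.2 (le_top : (2 : ℕ∞) ≤ ⊤))) θ φ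
  exact ⟨pairing.flip w, fun a => hw (pairing a)⟩

end ConvAlg

/-! ### The Laplacian on monomials -/

theorem lapS_mul (f g : ℝ → ℝ) (θ φ : ℝ) :
    lapS (fun t p => f t * g p) θ φ
      = 1 / Real.sin θ * deriv (fun t => Real.sin t * deriv f t) θ * g φ
        + 1 / Real.sin θ ^ 2 * (f θ * deriv (deriv g) φ) := by
  simp only [lapS, dTheta, dPhi, deriv_mul_const_field, deriv_const_mul_field', ← mul_assoc]

theorem hasDerivAt_cos_pow_mul_sin_pow (i j : ℕ) (t : ℝ) :
    HasDerivAt (fun t => Real.cos t ^ i * Real.sin t ^ j)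
      (j * (Real.cos t ^ (i + 1) * Real.sin t ^ (j - 1))
        - i * (Real.cos t ^ (i - 1) * Real.sin t ^ (j + 1))) t := by
  refine (((Real.hasDerivAt_cos t).fun_pow i).fun_mul
    ((Real.hasDerivAt_sin t).fun_pow j)).congr_deriv ?_
  ring

theorem natCast_mul_pow_pred_mul (n : ℕ) (x : ℝ) : n * x ^ (n - 1) * x = n * x ^ n := by
  rcases n with _ | n <;> simp [pow_succ, mul_assoc]

theorem deriv_sin_mul_deriv_cos_pow_mul_sin_pow (i j : ℕ) {θ : ℝ} (hθ : Real.sin θ ≠ 0) :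
    1 / Real.sin θ *
        deriv (fun t => Real.sin t * deriv (fun t => Real.cos t ^ i * Real.sin t ^ (2 * j)) t) θ
      = i * (i - 1) * Real.cos θ ^ (i - 2) * Real.sin θ ^ (2 * j)
        - (i + 2 * j) * (i + 2 * j + 1) * Real.cos θ ^ i * Real.sin θ ^ (2 * j)
        + 4 * j ^ 2 * Real.cos θ ^ i * Real.sin θ ^ (2 * (j - 1)) := by
  have hflux : (fun t => Real.sin t * deriv (fun t => Real.cos t ^ i * Real.sin t ^ (2 * j)) t)
      = fun t => ((2 * j : ℕ) : ℝ) * (Real.cos t ^ (i + 1) * Real.sin t ^ (2 * j))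
        - i * (Real.cos t ^ (i - 1) * Real.sin t ^ (2 * j + 2)) := by
    funext t
    rw [(hasDerivAt_cos_pow_mul_sin_pow i (2 * j) t).deriv]
    linear_combination Real.cos t ^ (i + 1) * natCast_mul_pow_pred_mul (2 * j) (Real.sin t)
  have hderiv := ((hasDerivAt_cos_pow_mul_sin_pow (i + 1) (2 * j) θ).const_mul
    ((2 * j : ℕ) : ℝ)).fun_sub
    ((hasDerivAt_cos_pow_mul_sin_pow (i - 1) (2 * j + 2) θ).const_mul (i : ℝ))
  rw [hflux, hderiv.deriv, Nat.add_sub_cancel, Nat.sub_sub]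
  have hsq := Real.sin_sq_add_cos_sq θ
  generalize Real.sin θ = s at *
  generalize Real.cos θ = c at *
  rw [one_div, inv_mul_eq_iff_eq_mul₀ hθ]
  have hpythag : (4 * j ^ 2 * c ^ i * s ^ (2 * j - 1) + i * (i - 1) * c ^ (i - 2) * s ^ (2 * j + 1))
      * (s ^ 2 + c ^ 2 - 1) = 0 := by rw [hsq]; ring
  rcases i with _ | _ | i <;> rcases j with _ | j <;>
    simp [-mul_eq_zero, mul_add] at hpythag ⊢ <;> grind

theorem deriv_deriv_cos_two_mul_pow (j : ℕ) (φ : ℝ) :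
    deriv (deriv fun p => Real.cos (2 * p) ^ j) φ
      = 4 * (j * (j - 1)) * Real.cos (2 * φ) ^ (j - 2) - 4 * j ^ 2 * Real.cos (2 * φ) ^ j := by
  have hcos (p : ℝ) : HasDerivAt (fun p => Real.cos (2 * p) ^ j)
      (-(2 * j * (Real.cos (2 * p) ^ (j - 1) * Real.sin (2 * p)))) p := by
    refine ((((hasDerivAt_id p).const_mul 2).cos).fun_pow j).congr_deriv ?_
    simp only [id]
    ring
  have hderiv := ((hasDerivAt_cos_pow_mul_sin_pow (j - 1) 1 (2 * φ)).comp φ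
    ((hasDerivAt_id φ).const_mul 2)).const_mul (-(2 * j) : ℝ)
  have hfun : (deriv fun p => Real.cos (2 * p) ^ j) = fun p =>
      -(2 * j) * (Real.cos (2 * p) ^ (j - 1) * Real.sin (2 * p) ^ 1) :=
    funext fun p => (hcos p).deriv.trans (by ring)
  rw [hfun]
  refine hderiv.deriv.trans ?_
  have hsq := Real.sin_sq_add_cos_sq (2 * φ)
  generalize Real.sin (2 * φ) = s at *
  generalize Real.cos (2 * φ) = c at *
  have hpythag : 4 * (j * (j - 1)) * c ^ (j - 2) * (s ^ 2 + c ^ 2 - 1) = 0 := by rw [hsq]; ring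
  rcases j with _ | _ | j <;> simp [-mul_eq_zero] at hpythag ⊢ <;> grind

namespace ConvAlg

/-- The total degree of `cos θ ^ p.1 * (sin² θ cos 2φ) ^ p.2` as a polynomial on the sphere. -/
def degree (p : ℕ × ℕ) : ℕ := p.1 + 2 * p.2

theorem lapS_toSphere_single {ε : ℝ} (hε : |ε| < 1) (p : ℕ × ℕ) {θ : ℝ} (hθ : Real.sin θ ≠ 0)
    (φ : ℝ) :
    lapS (toSphere ε (single p)) θ φ
      = p.1 * (p.1 - 1) / 4096 * toSphere ε (single (p.1 - 2, p.2)) θ φ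
        + ε ^ 2 * (4 * p.2 * (p.2 - 1) * (toSphere ε (single (p.1, p.2 - 2)) θ φ
          - 4096 * toSphere ε (single (p.1 + 2, p.2 - 2)) θ φ))
        - degree p * (degree p + 1) * toSphere ε (single p) θ φ := by
  obtain ⟨i, j⟩ := p
  have hsep : toSphere ε (single (i, j)) = fun t p =>
      (64⁻¹ ^ i * ε ^ j * (Real.cos t ^ i * Real.sin t ^ (2 * j))) * Real.cos (2 * p) ^ j := by
    funext t p
    simp only [toSphere_single hε]
    ring
  have hsin : toSphere ε (single (i, j - 2)) θ φ - 4096 * toSphere ε (single (i + 2, j - 2)) θ φ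
      = Real.sin θ ^ 2 * toSphere ε (single (i, j - 2)) θ φ := by
    simp only [toSphere_single hε, Real.sin_sq]
    ring
  have hpolar := deriv_sin_mul_deriv_cos_pow_mul_sin_pow i j hθ
  rw [hsin, hsep, lapS_mul]
  simp only [deriv_const_mul_field', mul_left_comm (Real.sin _) (64⁻¹ ^ i * ε ^ j),
    deriv_deriv_cos_two_mul_pow, toSphere_single hε, degree]
  rw [mul_left_comm, hpolar]
  generalize Real.sin θ = s at *
  rcases i with _ | _ | i <;> rcases j with _ | _ | j <;> simp [mul_pow, div_pow] <;> field_simp <;>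
    ring

/-- The inverse of `6 - d (d + 1)`, the eigenvalue of `Δ + 6` on spherical harmonics of degree
`d = degree p`. At the resonant degree `d = 2` it takes the junk value `0`. -/
def shellInv (p : ℕ × ℕ) : ℝ := (6 - (degree p : ℝ) * (degree p + 1))⁻¹

theorem max_one_le_abs_six_sub {d : ℕ} (hd : d ≠ 2) :
    max 1 ((d : ℝ) * (d - 1)) ≤ |6 - (d : ℝ) * (d + 1)| := by
  obtain rfl | rfl | hd : d = 0 ∨ d = 1 ∨ 3 ≤ d := by omega
  · norm_num
  · norm_num
  · have hd' : (3 : ℝ) ≤ d := by exact_mod_cast hd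
    rw [abs_of_nonpos (by nlinarith)]
    exact max_le (by nlinarith) (by nlinarith)

theorem mul_shellInv_of_ne {p : ℕ × ℕ} (hp : degree p ≠ 2) :
    (6 - (degree p : ℝ) * (degree p + 1)) * shellInv p = 1 :=
  mul_inv_cancel₀ (abs_pos.1 ((zero_lt_one.trans_le (le_max_left _ _)).trans_le
    (max_one_le_abs_six_sub hp)))

theorem shellInv_of_eq {p : ℕ × ℕ} (hp : degree p = 2) : shellInv p = 0 := by
  rw [shellInv, hp]
  norm_num

theorem abs_mul_shellInv_le_one {p : ℕ × ℕ} {t : ℝ}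
    (ht : |t| ≤ max 1 ((degree p : ℝ) * (degree p - 1))) : |t * shellInv p| ≤ 1 := by
  rcases eq_or_ne (degree p) 2 with hp | hp
  · simp [shellInv_of_eq hp]
  · rw [shellInv, abs_mul, abs_inv]
    exact mul_inv_le_one_of_le₀ (ht.trans (max_one_le_abs_six_sub hp)) (abs_nonneg _)

theorem abs_fst_mul_pred_mul_shellInv_le_one (p : ℕ × ℕ) :
    |(p.1 : ℝ) * (p.1 - 1) * shellInv p| ≤ 1 := by
  refine abs_mul_shellInv_le_one (le_max_of_le_right ?_)
  rcases p with ⟨_ | i, j⟩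
  · rcases j with _ | j
    · simp [degree]
    · norm_num [degree]
      nlinarith [(Nat.cast_nonneg j : (0 : ℝ) ≤ j)]
  · rw [abs_of_nonneg (by norm_num; positivity)]
    norm_num [degree]
    nlinarith [(Nat.cast_nonneg j : (0 : ℝ) ≤ j), (Nat.cast_nonneg i : (0 : ℝ) ≤ i),
      mul_nonneg (Nat.cast_nonneg i : (0 : ℝ) ≤ i) (Nat.cast_nonneg j : (0 : ℝ) ≤ j)]

theorem abs_snd_mul_pred_mul_shellInv_le_one (p : ℕ × ℕ) :
    |4 * (p.2 : ℝ) * (p.2 - 1) * shellInv p| ≤ 1 := by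
  refine abs_mul_shellInv_le_one (le_max_of_le_right ?_)
  rcases p with ⟨i, _ | j⟩
  · rcases i with _ | i
    · simp [degree]
    · norm_num [degree]
      positivity
  · rw [abs_of_nonneg (by norm_num; positivity)]
    norm_num [degree]
    nlinarith [(Nat.cast_nonneg j : (0 : ℝ) ≤ j), (Nat.cast_nonneg i : (0 : ℝ) ≤ i),
      mul_nonneg (Nat.cast_nonneg i : (0 : ℝ) ≤ i) (Nat.cast_nonneg j : (0 : ℝ) ≤ j)]

/-- Division of each monomial of degree `d ≠ 2` by `6 - d (d + 1)`; monomials of degree `2` are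
annihilated. It inverts `Δ + 6` up to terms of lower degree. -/
def shellResolvent : ConvAlg (ℕ × ℕ) →L[ℝ] ConvAlg (ℕ × ℕ) :=
  lift (fun p => shellInv p • single p) 1 fun p => by
    rw [norm_smul, norm_single, mul_one, Real.norm_eq_abs, ← one_mul (shellInv p)]
    exact abs_mul_shellInv_le_one (by simp)

/-- The projection annihilating the monomials of the resonant degree `2`. -/
def nonresonantProj : ConvAlg (ℕ × ℕ) →L[ℝ] ConvAlg (ℕ × ℕ) :=
  lift (fun p => if degree p = 2 then 0 else single p) 1 fun p => by split_ifs <;> simp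

/-- The part of `Δ ∘ shellResolvent` that comes from `∂_θ` and lowers the degree in `cos θ`. -/
def polarDrop : ConvAlg (ℕ × ℕ) →L[ℝ] ConvAlg (ℕ × ℕ) :=
  lift (fun p => (p.1 * (p.1 - 1) / 4096 * shellInv p) • single (p.1 - 2, p.2)) (1 / 4096)
    fun p => by
      rw [norm_smul, norm_single, mul_one, Real.norm_eq_abs, div_mul_eq_mul_div, abs_div,
        abs_of_pos (by norm_num : (0 : ℝ) < 4096)]
      exact div_le_div_of_nonneg_right (abs_fst_mul_pred_mul_shellInv_le_one p) (by norm_num)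

/-- The part of `Δ ∘ shellResolvent` that comes from `∂_φ` and lowers the azimuthal degree; in
`Δ ∘ shellResolvent` it carries a factor `ε ^ 2`. -/
def azimuthalDrop : ConvAlg (ℕ × ℕ) →L[ℝ] ConvAlg (ℕ × ℕ) :=
  lift (fun p => (4 * p.2 * (p.2 - 1) * shellInv p) •
      (single (p.1, p.2 - 2) - (4096 : ℝ) • single (p.1 + 2, p.2 - 2))) 4097
    fun p => by
      have h : ‖(single (p.1, p.2 - 2) - (4096 : ℝ) • single (p.1 + 2, p.2 - 2) :
          ConvAlg (ℕ × ℕ))‖ ≤ 4097 :=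
        (norm_sub_le _ _).trans (by norm_num [norm_smul])
      rw [norm_smul, Real.norm_eq_abs]
      exact (mul_le_of_le_one_left (norm_nonneg _)
        (abs_snd_mul_pred_mul_shellInv_le_one p)).trans h

theorem norm_polarDrop_lt_one : ‖polarDrop‖ < 1 :=
  (norm_lift_le _).trans_lt (by norm_num)

variable {ε : ℝ}

theorem lapS_toSphere_shellResolvent (hε : |ε| < 1) (a : ConvAlg (ℕ × ℕ)) {θ : ℝ}
    (hθ : Real.sin θ ≠ 0) (φ : ℝ) :
    lapS (toSphere ε (shellResolvent a)) θ φ + 6 * toSphere ε (shellResolvent a) θ φ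
      = toSphere ε (nonresonantProj a + polarDrop a + ε ^ 2 • azimuthalDrop a) θ φ := by
  obtain ⟨L, hL⟩ := exists_lapS_toSphere_eq hε θ φ
  let ev : ConvAlg (ℕ × ℕ) →L[ℝ] ℝ := pairing.flip (spherePoint ε (θ, φ))
  have hev (b : ConvAlg (ℕ × ℕ)) : toSphere ε b θ φ = ev b := rfl
  suffices h : (L + (6 : ℝ) • ev).comp shellResolvent
      = ev.comp (nonresonantProj + polarDrop + ε ^ 2 • azimuthalDrop) by
    rw [hL]
    exact congr($h a)
  refine ext_single fun p => ?_
  have hlap := lapS_toSphere_single hε p hθ φ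
  simp only [hL, hev] at hlap
  simp only [ContinuousLinearMap.comp_apply, add_apply,
    smul_apply, shellResolvent, nonresonantProj, polarDrop, azimuthalDrop,
    lift_single, map_add, map_sub, map_smul, smul_eq_mul, hlap]
  split_ifs with hp
  · simp [shellInv_of_eq hp]
  · linear_combination ev (single p) * mul_shellInv_of_ne hp

end ConvAlg

/-! ### Bordered operators and the implicit function theorem -/

theorem bijective_sub_comp_sub_comp {R E F V W : Type*} [Ring R] [AddCommGroup E] [Module R E]
    [AddCommGroup F] [Module R F] [AddCommGroup V] [Module R V] [AddCommGroup W] [Module R W]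
    {T : E →ₗ[R] F} {ℓ : E →ₗ[R] V} {i j : V →ₗ[R] F} {σ : F →ₗ[R] W}
    (hT : Function.Bijective T) (hσT : σ ∘ₗ T = σ ∘ₗ j ∘ₗ ℓ)
    (hσj : Function.Injective (σ ∘ₗ j)) (hσi : Function.Bijective (σ ∘ₗ i)) :
    Function.Bijective (T - j ∘ₗ ℓ - i ∘ₗ ℓ) := by
  have hσ (x : E) : σ (T x) = σ (j (ℓ x)) := congr($hσT x)
  refine ⟨LinearMap.ker_eq_bot.1 (LinearMap.ker_eq_bot'.2 fun x hx => ?_), fun y => ?_⟩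
  · simp only [LinearMap.sub_apply, LinearMap.comp_apply] at hx
    have hℓ : ℓ x = 0 := hσi.injective <| by
      have h := congr(σ $hx)
      simpa [hσ] using h
    exact hT.injective (by simpa [hℓ] using hx)
  · obtain ⟨v, hv⟩ := hσi.surjective (-σ y)
    obtain ⟨x, hx⟩ := hT.surjective (y + j v + i v)
    have hℓ : ℓ x = v := hσj <| by
      have h := hσ x
      simp only [LinearMap.comp_apply] at hv ⊢
      rw [← h, hx, map_add, map_add, hv]
      abel
    refine ⟨x, ?_⟩
    simp only [LinearMap.sub_apply, LinearMap.comp_apply, hx, hℓ]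
    abel

section ImplicitFunction

open Filter Topology

theorem exists_norm_sub_le_of_contDiffAt {E F : Type*} [NormedAddCommGroup E] [NormedSpace ℝ E]
    [CompleteSpace E] [NormedAddCommGroup F] [NormedSpace ℝ F] [CompleteSpace F]
    {f : ℝ × E → F} {x₀ : E} {e : E ≃L[ℝ] F} (hf : ContDiffAt ℝ 1 f (0, x₀))
    (he : HasFDerivAt (fun x => f (0, x)) (e : E →L[ℝ] F) x₀) :
    ∃ C r, 0 < r ∧ ∀ ε : ℝ, |ε| ≤ r → ∃ x, ‖x - x₀‖ ≤ C * |ε| ∧ f (ε, x) = f (0, x₀) := by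
  have hslice :=
    (hf.differentiableAt one_ne_zero).hasFDerivAt.comp x₀ (hasFDerivAt_prodMk_right 0 x₀)
  have hinv : (fderiv ℝ f (0, x₀) ∘L .inr ℝ ℝ E).IsInvertible := ⟨e, he.unique hslice⟩
  obtain ⟨C, hC⟩ :=
    (hf.hasStrictFDerivAt_implicitFunction one_ne_zero hinv).hasFDerivAt.isBigO_sub.bound
  obtain ⟨r, hr, hball⟩ := Metric.eventually_nhds_iff_ball.1
    (hC.and (hf.eventually_apply_implicitFunction one_ne_zero hinv))
  refine ⟨C, r / 2, half_pos hr, fun ε hε => ⟨hf.implicitFunction one_ne_zero hinv ε, ?_⟩⟩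
  have h := hball ε (by simpa using hε.trans_lt (half_lt_self hr))
  rwa [hf.implicitFunction_apply_self one_ne_zero hinv, sub_zero, Real.norm_eq_abs] at h

theorem exists_solution_near_of_bijective {A : Type*} [NormedCommRing A] [NormedAlgebra ℝ A]
    [CompleteSpace A] (N K D : A →L[ℝ] A) (c₁ c₂ : A →L[ℝ] ℝ) (c₃ c₄ : ℝ) {q x₀ : A}
    (hbij : Function.Bijective (N - c₁.smulRight q - c₂.smulRight (q ^ 2)))
    (hx₀ : N x₀ = c₁ x₀ • q + c₂ x₀ • q ^ 2 + c₃ • q ^ 3 + c₄ • q ^ 4) :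
    ∃ C r, 0 < r ∧ ∀ ε : ℝ, |ε| ≤ r → ∃ x, ‖x - x₀‖ ≤ C * |ε| ∧
      N x + ε ^ 2 • K x = c₁ x • (q + ε • D x) + c₂ x • (q + ε • D x) ^ 2
        + c₃ • (q + ε • D x) ^ 3 + c₄ • (q + ε • D x) ^ 4 := by
  let f : ℝ × A → A := fun z => N z.2 + z.1 ^ 2 • K z.2 - (c₁ z.2 • (q + z.1 • D z.2)
    + c₂ z.2 • (q + z.1 • D z.2) ^ 2 + c₃ • (q + z.1 • D z.2) ^ 3 + c₄ • (q + z.1 • D z.2) ^ 4)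
  have hf : ContDiffAt ℝ 1 f (0, x₀) := by fun_prop
  let e := ContinuousLinearEquiv.ofBijective (N - c₁.smulRight q - c₂.smulRight (q ^ 2))
    (LinearMap.ker_eq_bot.2 hbij.injective) (LinearMap.range_eq_top.2 hbij.surjective)
  have he : HasFDerivAt (fun x => f (0, x)) (e : A →L[ℝ] A) x₀ := by
    have hlin : (fun x => f (0, x)) = fun x => e x - (c₃ • q ^ 3 + c₄ • q ^ 4) := by
      funext x
      simp only [f, e, ContinuousLinearEquiv.coeFn_ofBijective, sub_apply,
        ContinuousLinearMap.smulRight_apply, zero_smul, add_zero, zero_pow two_ne_zero]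
      abel
    rw [hlin]
    exact e.hasFDerivAt.sub_const _
  obtain ⟨C, r, hr, h⟩ := exists_norm_sub_le_of_contDiffAt hf he
  refine ⟨C, r, hr, fun ε hε => ?_⟩
  obtain ⟨x, hx, hfx⟩ := h ε hε
  refine ⟨x, hx, sub_eq_zero.1 (hfx.trans ?_)⟩
  simp [f, hx₀]

end ImplicitFunction

section Polynomials

open Polynomial

/-! ### Derivatives of Legendre polynomials -/

/-- The `m`-th derivative of the Legendre polynomial `P_n`, without the normalization
`1 / (2 ^ n * n!)` of Rodrigues' formula. -/
def legDeriv (n m : ℕ) : ℝ[X] := derivative^[n + m] ((X ^ 2 - 1) ^ n)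

theorem iterate_derivative_X_sq_sub_one_pow (n k : ℕ) :
    (X ^ 2 - 1) * derivative^[k + 2] ((X ^ 2 - 1 : ℝ[X]) ^ n)
      + 2 * ((k : ℝ[X]) + 1 - (n : ℝ[X])) * X * derivative^[k + 1] ((X ^ 2 - 1) ^ n)
      + ((k : ℝ[X]) + 1) * ((k : ℝ[X]) - 2 * (n : ℝ[X])) * derivative^[k] ((X ^ 2 - 1) ^ n)
      = 0 := by
  have hy : (X ^ 2 - 1) * derivative ((X ^ 2 - 1 : ℝ[X]) ^ n)
      = 2 * (n : ℝ[X]) * X * (X ^ 2 - 1) ^ n := by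
    rcases n with _ | n
    · simp
    · simp only [derivative_pow, Nat.cast_add, Nat.cast_one, map_add, map_natCast, map_one,
        add_tsub_cancel_right, derivative_sub, Nat.cast_ofNat, C_ofNat, Nat.add_one_sub_one,
        pow_one, derivative_X, mul_one, derivative_one, sub_zero]
      ring
  generalize (X ^ 2 - 1 : ℝ[X]) ^ n = y at hy ⊢
  simp only [Function.iterate_succ_apply']
  induction k with
  | zero =>
    have h := congr(derivative $hy)
    simp only [derivative_mul, derivative_sub, derivative_X_pow, derivative_X, derivative_one,
      derivative_natCast, derivative_ofNat, Nat.cast_ofNat, C_ofNat] at h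
    simp only [Function.iterate_zero_apply, Nat.cast_zero]
    linear_combination h
  | succ k ih =>
    have h := congr(derivative $ih)
    simp only [Function.iterate_succ_apply']
    generalize derivative^[k] y = z at h ⊢
    simp only [derivative_mul, derivative_add, derivative_sub, derivative_X_pow, derivative_X,
      derivative_one, derivative_natCast, derivative_ofNat, derivative_zero, Nat.cast_ofNat,
      C_ofNat] at h
    push_cast
    linear_combination h

/-- The operator `(1 - X²) f'' - 2 (m + 1) X f'`. The Laplacian maps `sin^m θ f(cos θ) cos (m φ)`
to the function of the same form with `f` replaced by its image minus `m (m + 1) f`. -/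
def ultraspherical (m : ℕ) (f : ℝ[X]) : ℝ[X] :=
  (1 - X ^ 2) * derivative (derivative f) - 2 * ((m : ℝ[X]) + 1) * X * derivative f

theorem ultraspherical_legDeriv (n m : ℕ) :
    ultraspherical m (legDeriv n m) = (m * (m + 1) - n * (n + 1) : ℝ) • legDeriv n m := by
  have h := iterate_derivative_X_sq_sub_one_pow n (n + m)
  simp only [Function.iterate_succ_apply'] at h
  simp only [ultraspherical, legDeriv, smul_eq_C_mul]
  push_cast at h
  simp only [map_sub, map_mul, map_add, map_natCast, map_one]
  linear_combination -h

theorem ultraspherical_X_pow (m i : ℕ) :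
    ultraspherical m (X ^ i)
      = (i * (i - 1) : ℝ) • X ^ (i - 2) - (i * (i - 1) + 2 * (m + 1) * i : ℝ) • X ^ i := by
  rcases i with _ | _ | i <;> simp [ultraspherical, smul_eq_C_mul, C_ofNat]
  ring

/-- Integration of polynomials over `[-1, 1]`. -/
def intUnit : ℝ[X] →ₗ[ℝ] ℝ where
  toFun p := ∫ s in (-1 : ℝ)..1, p.eval s
  map_add' p q := by
    simp only [eval_add]
    exact intervalIntegral.integral_add (p.continuous.intervalIntegrable _ _)
      (q.continuous.intervalIntegrable _ _)
  map_smul' c p := by simp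

theorem intUnit_apply (p : ℝ[X]) : intUnit p = ∫ s in (-1 : ℝ)..1, p.eval s := rfl

theorem intUnit_derivative (p : ℝ[X]) : intUnit (derivative p) = p.eval 1 - p.eval (-1) :=
  intervalIntegral.integral_eq_sub_of_hasDerivAt (fun s _ => p.hasDerivAt s)
    (p.derivative.continuous.intervalIntegrable _ _)

theorem intUnit_ultraspherical_mul (m : ℕ) (f g : ℝ[X]) :
    intUnit (ultraspherical m f * ((1 - X ^ 2) ^ m * g))
      = intUnit (f * ((1 - X ^ 2) ^ m * ultraspherical m g)) := by
  have h := intUnit_derivative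
    ((1 - X ^ 2) ^ (m + 1) * (derivative f * g - f * derivative g))
  rw [← sub_eq_zero, ← map_sub]
  refine (congrArg intUnit ?_).trans (h.trans (by simp))
  simp only [ultraspherical, derivative_mul, derivative_pow, Nat.cast_add, Nat.cast_one, map_add,
    map_natCast, map_one, add_tsub_cancel_right, derivative_sub, derivative_one, Nat.cast_ofNat,
    C_ofNat, Nat.add_one_sub_one, pow_one, derivative_X, mul_one, zero_sub, mul_neg, neg_mul]
  ring

/-! ### Moments of convolution series -/

namespace ConvAlg

/-- The weighted integral `∫ a_j(s) w(s) ds` over `[-1, 1]` of the coefficient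
`a_j(s) = ∑ a_{ij} (s / 64)^i` of `y ^ j` in the series `a`. -/
def moment (j : ℕ) (w : ℝ[X]) : ConvAlg (ℕ × ℕ) →L[ℝ] ℝ :=
  lift (fun p => if p.2 = j then intUnit ((C 64⁻¹ * X) ^ p.1 * w) else 0)
    (∫ s in (-1 : ℝ)..1, |w.eval s|) fun p => by
      have hC : 0 ≤ ∫ s in (-1 : ℝ)..1, |w.eval s| :=
        intervalIntegral.integral_nonneg (by norm_num) fun _ _ => abs_nonneg _
      split_ifs
      · refine intervalIntegral.norm_integral_le_of_norm_le (by norm_num)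
          (.of_forall fun s hs => ?_) (w.continuous.abs.intervalIntegrable _ _)
        have hs' : |64⁻¹ * s| ≤ 1 := by
          rw [abs_le]
          constructor <;> linarith [hs.1, hs.2]
        simpa [abs_mul, ← mul_pow] using
          mul_le_of_le_one_left (abs_nonneg (w.eval s)) (pow_le_one₀ (abs_nonneg _) hs')
      · simpa using hC

theorem moment_single (j : ℕ) (w : ℝ[X]) (p : ℕ × ℕ) :
    moment j w (single p) = if p.2 = j then 64⁻¹ ^ p.1 * intUnit (X ^ p.1 * w) else 0 := by
  rw [moment, lift_single, mul_pow, ← C_pow, mul_assoc, ← smul_eq_C_mul, map_smul, smul_eq_mul]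

theorem moment_aeval_mul_single (j l : ℕ) (w p : ℝ[X]) :
    moment j w (aeval ((64 : ℝ) • single (1, 0)) p * single (0, l))
      = if l = j then intUnit (p * w) else 0 := by
  induction p using Polynomial.induction_on' with
  | add p q hp hq =>
    rw [map_add, add_mul, map_add, hp, hq]
    split_ifs <;> simp [add_mul]
  | monomial n c =>
    rw [aeval_monomial, _root_.smul_pow, single_pow, ← Algebra.smul_def, smul_smul, smul_mul_assoc,
      single_mul_single, map_smul, moment_single, ← C_mul_X_pow_eq_monomial, ← smul_eq_C_mul,
      smul_mul_assoc, map_smul]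
    simp [mul_assoc]

theorem moment_add_single_pow (j k : ℕ) (w p : ℝ[X]) :
    moment j w ((aeval ((64 : ℝ) • single (1, 0)) p + single (0, 1)) ^ k)
      = k.choose j * intUnit (p ^ (k - j) * w) := by
  have hterm (l : ℕ) : moment j w (single (0, 1) ^ l *
      aeval ((64 : ℝ) • single (1, 0)) p ^ (k - l) * (k.choose l : ConvAlg (ℕ × ℕ)))
        = if l = j then k.choose l * intUnit (p ^ (k - l) * w) else 0 := by
    rw [mul_comm, ← nsmul_eq_mul, map_nsmul, ← map_pow, mul_comm, single_pow, Prod.smul_mk,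
      smul_zero, nsmul_one, Nat.cast_id, moment_aeval_mul_single, nsmul_eq_mul, mul_ite, mul_zero]
  simp only [add_comm (aeval _ p), add_pow, map_sum, hterm, Finset.sum_ite_eq', Finset.mem_range]
  split_ifs with h
  · rfl
  · rw [Nat.choose_eq_zero_of_lt (by omega), Nat.cast_zero, zero_mul]

/-- The moment testing a series against the spherical harmonic of degree `n` and azimuthal
order `2 * j`. -/
def legMoment (n j : ℕ) : ConvAlg (ℕ × ℕ) →L[ℝ] ℝ :=
  moment j ((1 - X ^ 2) ^ (2 * j) * legDeriv n (2 * j))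

theorem legMoment_nonresonantProj_add_polarDrop (n j : ℕ) (a : ConvAlg (ℕ × ℕ)) :
    legMoment n j (nonresonantProj a + polarDrop a)
      = (6 - n * (n + 1)) * legMoment n j (shellResolvent a) := by
  suffices h : (legMoment n j).comp (nonresonantProj + polarDrop)
      = (6 - n * (n + 1) : ℝ) • (legMoment n j).comp shellResolvent from congr($h a)
  refine ext_single fun ⟨i, l⟩ => ?_
  have h := intUnit_ultraspherical_mul (2 * j) (X ^ i) (legDeriv n (2 * j))
  simp only [ultraspherical_X_pow, ultraspherical_legDeriv, mul_smul_comm, sub_mul, smul_mul_assoc,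
    map_sub, map_smul, smul_eq_mul] at h
  simp only [ContinuousLinearMap.comp_apply, add_apply, smul_apply, nonresonantProj, polarDrop,
    shellResolvent, lift_single, map_add, map_smul, legMoment, smul_eq_mul]
  rcases eq_or_ne l j with rfl | hl
  swap
  · split_ifs <;> simp [moment_single, hl]
  have hdrop : (i : ℝ) * (i - 1) / 4096 * 64⁻¹ ^ (i - 2) = i * (i - 1) * 64⁻¹ ^ i := by
    rcases i with _ | _ | i <;> simp [pow_succ]
    ring
  split_ifs with hd
  · simp [shellInv_of_eq hd]
  · have hp := mul_shellInv_of_ne hd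
    simp only [degree, Nat.cast_add, Nat.cast_mul, Nat.cast_ofNat] at hp
    simp only [moment_single, if_true]
    push_cast at h
    generalize intUnit (X ^ i * _) = J at h ⊢
    generalize intUnit (X ^ (i - 2) * _) = J' at h ⊢
    linear_combination (-64⁻¹ ^ i * J) * hp + shellInv (i, l) * 64⁻¹ ^ i * h
      + shellInv (i, l) * J' * hdrop

end ConvAlg

/-! ### Moments of the leading-order profile -/

theorem intUnit_X_pow (i : ℕ) : intUnit (X ^ i) = (1 + (-1) ^ i) / (i + 1) := by
  simp [intUnit_apply, integral_pow, pow_succ]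

theorem intUnit_C_mul (c : ℝ) (p : ℝ[X]) : intUnit (C c * p) = c * intUnit p := by
  rw [← smul_eq_C_mul, map_smul, smul_eq_mul]

theorem intUnit_add_pow_mul (a b : ℝ) (w : ℝ[X]) (k : ℕ) :
    intUnit ((C a * X + C b * X ^ 2) ^ k * w)
      = ∑ i ∈ Finset.range (k + 1),
        a ^ i * b ^ (k - i) * k.choose i * intUnit (X ^ (i + 2 * (k - i)) * w) := by
  rw [add_pow, Finset.sum_mul, map_sum]
  refine Finset.sum_congr rfl fun i _ => ?_
  rw [← intUnit_C_mul]
  congr 1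
  simp only [map_mul, map_pow, map_natCast]
  ring

theorem legDeriv_eq_sum (n m : ℕ) :
    legDeriv n m = ∑ i ∈ Finset.range (n + 1),
      ((-1) ^ (n - i) * n.choose i * (2 * i).descFactorial (n + m) : ℝ) •
        (X : ℝ[X]) ^ (2 * i - (n + m)) := by
  rw [legDeriv, sub_eq_add_neg, add_pow, iterate_derivative_sum]
  refine Finset.sum_congr rfl fun i _ => ?_
  have h : ((X : ℝ[X]) ^ 2) ^ i * (-1) ^ (n - i) * (n.choose i : ℝ[X])
      = ((-1) ^ (n - i) * n.choose i : ℝ) • X ^ (2 * i) := by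
    simp only [smul_eq_C_mul, map_mul, map_pow, map_neg, map_one, map_natCast]
    ring
  rw [h, iterate_derivative_smul, iterate_derivative_X_pow_eq_smul, smul_smul]

theorem legDeriv_two_zero : legDeriv 2 0 = 12 * X ^ 2 - 4 := by
  rw [legDeriv_eq_sum]
  norm_num [Finset.sum_range_succ, Nat.descFactorial, Nat.choose, smul_eq_C_mul, C_ofNat]
  ring

theorem legDeriv_two_two : legDeriv 2 2 = 24 := by
  rw [legDeriv_eq_sum]
  norm_num [Finset.sum_range_succ, Nat.descFactorial, Nat.choose, smul_eq_C_mul, C_ofNat]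

theorem legDeriv_four_two : legDeriv 4 2 = 20160 * X ^ 2 - 2880 := by
  rw [legDeriv_eq_sum]
  norm_num [Finset.sum_range_succ, Nat.descFactorial, Nat.choose, smul_eq_C_mul, C_ofNat]
  ring

theorem legDeriv_six_two : legDeriv 6 2 = 19958400 * X ^ 4 - 10886400 * X ^ 2 + 604800 := by
  rw [legDeriv_eq_sum]
  norm_num [Finset.sum_range_succ, Nat.descFactorial, Nat.choose, smul_eq_C_mul, C_ofNat]
  ring

theorem intUnit_X_pow_mul_legDeriv_two_zero (i : ℕ) :
    intUnit (X ^ i * legDeriv 2 0)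
      = 12 * intUnit (X ^ (i + 2)) - 4 * intUnit (X ^ i) := by
  simp only [← intUnit_C_mul, ← map_sub, legDeriv_two_zero, C_ofNat]
  congr 1
  ring

theorem intUnit_X_pow_mul_one_sub_sq_sq_mul_legDeriv_two_two (i : ℕ) :
    intUnit (X ^ i * ((1 - X ^ 2) ^ 2 * legDeriv 2 2))
      = 24 * intUnit (X ^ i) - 48 * intUnit (X ^ (i + 2)) + 24 * intUnit (X ^ (i + 4)) := by
  simp only [← intUnit_C_mul, ← map_sub, ← map_add, legDeriv_two_two, C_ofNat]
  congr 1
  ring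

theorem intUnit_X_pow_mul_one_sub_sq_sq_mul_legDeriv_four_two (i : ℕ) :
    intUnit (X ^ i * ((1 - X ^ 2) ^ 2 * legDeriv 4 2))
      = 20160 * intUnit (X ^ (i + 6)) - 43200 * intUnit (X ^ (i + 4))
        + 25920 * intUnit (X ^ (i + 2)) - 2880 * intUnit (X ^ i) := by
  simp only [← intUnit_C_mul, ← map_sub, ← map_add, legDeriv_four_two, C_ofNat]
  congr 1
  ring

theorem intUnit_X_pow_mul_one_sub_sq_sq_mul_legDeriv_six_two (i : ℕ) :
    intUnit (X ^ i * ((1 - X ^ 2) ^ 2 * legDeriv 6 2))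
      = 604800 * (33 * intUnit (X ^ (i + 8)) - 84 * intUnit (X ^ (i + 6))
        + 70 * intUnit (X ^ (i + 4)) - 20 * intUnit (X ^ (i + 2)) + intUnit (X ^ i)) := by
  simp only [← intUnit_C_mul, ← map_sub, ← map_add, legDeriv_six_two, C_ofNat]
  congr 1
  ring

namespace ConvAlg

/-- The series of `G cos θ + 3 B cos² θ + ε sin² θ cos 2φ`. -/
def profile (G B : ℝ) : ConvAlg (ℕ × ℕ) :=
  aeval ((64 : ℝ) • single (1, 0)) (C G * X + C (3 * B) * X ^ 2) + single (0, 1)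

theorem legMoment_profile_pow (n j k : ℕ) (G B : ℝ) :
    legMoment n j (profile G B ^ k) = k.choose j * ∑ i ∈ Finset.range (k - j + 1),
      G ^ i * (3 * B) ^ (k - j - i) * (k - j).choose i *
        intUnit (X ^ (i + 2 * (k - j - i)) * ((1 - X ^ 2) ^ (2 * j) * legDeriv n (2 * j))) := by
  rw [legMoment, profile, moment_add_single_pow, intUnit_add_pow_mul]

variable (G B c₁ c₂ c₃ c₄ : ℝ)

theorem legMoment_two_zero_quartic :
    legMoment 2 0 (c₁ • profile G B + c₂ • profile G B ^ 2 + c₃ • profile G B ^ 3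
        + c₄ • profile G B ^ 4)
      = 4 * (8 / 5 * B * c₁ + (8 / 15 * G ^ 2 + 144 / 35 * B ^ 2) * c₂
        + (144 / 35 * B * G ^ 2 + 72 / 7 * B ^ 3) * c₃
        + (16 / 35 * G ^ 4 + 144 / 7 * B ^ 2 * G ^ 2 + 288 / 11 * B ^ 4) * c₄) := by
  nth_rw 1 [← pow_one (profile G B)]
  simp only [map_add, map_smul, legMoment_profile_pow, mul_zero, pow_zero, one_mul,
    intUnit_X_pow_mul_legDeriv_two_zero,
    intUnit_X_pow]
  norm_num [Finset.sum_range_succ, Nat.choose]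
  ring

theorem legMoment_two_one_quartic :
    legMoment 2 1 (c₁ • profile G B + c₂ • profile G B ^ 2 + c₃ • profile G B ^ 3
        + c₄ • profile G B ^ 4)
      = 24 * (16 / 15 * c₁ + 32 / 35 * B * c₂ + (16 / 35 * G ^ 2 + 48 / 35 * B ^ 2) * c₃
        + (64 / 35 * B * G ^ 2 + 192 / 77 * B ^ 3) * c₄) := by
  nth_rw 1 [← pow_one (profile G B)]
  simp only [map_add, map_smul, legMoment_profile_pow, mul_one, intUnit_X_pow,
    intUnit_X_pow_mul_one_sub_sq_sq_mul_legDeriv_two_two]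
  norm_num [Finset.sum_range_succ, Nat.choose]
  ring

theorem legMoment_four_one_quartic :
    legMoment 4 1 (c₁ • profile G B + c₂ • profile G B ^ 2 + c₃ • profile G B ^ 3
        + c₄ • profile G B ^ 4)
      = 2880 * (128 / 105 * B * c₂ + (64 / 105 * G ^ 2 + 1152 / 385 * B ^ 2) * c₃
        + (1536 / 385 * B * G ^ 2 + 6912 / 1001 * B ^ 3) * c₄) := by
  nth_rw 1 [← pow_one (profile G B)]
  simp only [map_add, map_smul, legMoment_profile_pow, mul_one, intUnit_X_pow,
    intUnit_X_pow_mul_one_sub_sq_sq_mul_legDeriv_four_two]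
  norm_num [Finset.sum_range_succ, Nat.choose]
  ring

theorem legMoment_six_one_quartic :
    legMoment 6 1 (c₁ • profile G B + c₂ • profile G B ^ 2 + c₃ • profile G B ^ 3
        + c₄ • profile G B ^ 4)
      = 604800 * 2048 / 45045 * (27 * B ^ 2 * c₃ + (36 * B * G ^ 2 + 108 * B ^ 3) * c₄) := by
  nth_rw 1 [← pow_one (profile G B)]
  simp only [map_add, map_smul, legMoment_profile_pow, mul_one, intUnit_X_pow,
    intUnit_X_pow_mul_one_sub_sq_sq_mul_legDeriv_six_two]
  norm_num [Finset.sum_range_succ, Nat.choose]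
  ring

end ConvAlg

end Polynomials

namespace ConvAlg

theorem quartic_moment_determinant_pos {u v : ℝ} (hu : 0 ≤ u) (hv : 0 ≤ v) (huv : 0 < u + v) :
    0 < 16 / 45 * u ^ 3 - 128 / 105 * u ^ 2 * v + 384 / 455 * u * v ^ 2
      + 4608 / 5005 * v ^ 3 := by
  rcases hu.eq_or_lt with rfl | hu
  · have hv' : 0 < v := by simpa using huv
    norm_num
    positivity
  · nlinarith [pow_pos hu 3, mul_nonneg (sq_nonneg (u - 1.87 * v)) hu.le,
      mul_nonneg (sq_nonneg (u - 1.87 * v)) hv, mul_nonneg hu.le (sq_nonneg v), pow_nonneg hv 3]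

theorem exists_quartic_system_solution {G B s₄ s₆ : ℝ} (hGB : 0 < G ^ 2 + B ^ 2)
    (hs₆ : B = 0 → s₆ = 0) : ∃ c₁ c₂ c₃ c₄ : ℝ,
      8 / 5 * B * c₁ + (8 / 15 * G ^ 2 + 144 / 35 * B ^ 2) * c₂
        + (144 / 35 * B * G ^ 2 + 72 / 7 * B ^ 3) * c₃
        + (16 / 35 * G ^ 4 + 144 / 7 * B ^ 2 * G ^ 2 + 288 / 11 * B ^ 4) * c₄ = 0 ∧
      16 / 15 * c₁ + 32 / 35 * B * c₂ + (16 / 35 * G ^ 2 + 48 / 35 * B ^ 2) * c₃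
        + (64 / 35 * B * G ^ 2 + 192 / 77 * B ^ 3) * c₄ = 0 ∧
      128 / 105 * B * c₂ + (64 / 105 * G ^ 2 + 1152 / 385 * B ^ 2) * c₃
        + (1536 / 385 * B * G ^ 2 + 6912 / 1001 * B ^ 3) * c₄ = s₄ ∧
      27 * B ^ 2 * c₃ + (36 * B * G ^ 2 + 108 * B ^ 3) * c₄ = s₆ := by
  rcases eq_or_ne B 0 with rfl | hB
  · have hG : G ≠ 0 := by simpa using hGB.ne'
    refine ⟨-(45 / 64) * s₄, 0, 105 / 64 * s₄ / G ^ 2, 0, by ring, ?_, ?_, ?_⟩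
    · field_simp
      ring
    · field_simp
      ring
    · rw [hs₆ rfl]
      ring
  · -- The value of `c₄` comes from eliminating `c₁`, `c₂`, `c₃` from the first equation.
    obtain ⟨c₄, h₄⟩ : ∃ c₄, B * (16 / 45 * (G ^ 2) ^ 3 - 128 / 105 * (G ^ 2) ^ 2 * B ^ 2
          + 384 / 455 * G ^ 2 * (B ^ 2) ^ 2 + 4608 / 5005 * (B ^ 2) ^ 3) * c₄
        = -(B ^ 2 * (7 / 16 * G ^ 2 + 9 / 4 * B ^ 2) * s₄
          + (-(4 / 405) * G ^ 4 + 32 / 1155 * G ^ 2 * B ^ 2 + 64 / 1155 * B ^ 4) * s₆) :=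
      ⟨_, mul_div_cancel₀ _ (mul_ne_zero hB
        (quartic_moment_determinant_pos (sq_nonneg G) (sq_nonneg B) hGB).ne')⟩
    obtain ⟨c₃, h₃⟩ : ∃ c₃, 27 * B ^ 2 * c₃ = s₆ - (36 * B * G ^ 2 + 108 * B ^ 3) * c₄ :=
      ⟨_, mul_div_cancel₀ _ (by positivity)⟩
    obtain ⟨c₂, h₂⟩ : ∃ c₂, 128 / 105 * B * c₂ = s₄
        - (64 / 105 * G ^ 2 + 1152 / 385 * B ^ 2) * c₃
        - (1536 / 385 * B * G ^ 2 + 6912 / 1001 * B ^ 3) * c₄ :=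
      ⟨_, mul_div_cancel₀ _ (by simpa using hB)⟩
    obtain ⟨c₁, h₁⟩ : ∃ c₁, 16 / 15 * c₁ = -(32 / 35 * B * c₂)
        - (16 / 35 * G ^ 2 + 48 / 35 * B ^ 2) * c₃
        - (64 / 35 * B * G ^ 2 + 192 / 77 * B ^ 3) * c₄ :=
      ⟨_, mul_div_cancel₀ _ (by norm_num)⟩
    refine ⟨c₁, c₂, c₃, c₄, mul_left_cancel₀ (pow_ne_zero 3 hB) ?_, ?_, ?_, ?_⟩
    · linear_combination B ^ 3 * (3 / 2 * B) * h₁ + B ^ 2 * (7 / 16 * G ^ 2 + 9 / 4 * B ^ 2) * h₂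
        + (-(4 / 405) * G ^ 4 + 32 / 1155 * G ^ 2 * B ^ 2 + 64 / 1155 * B ^ 4) * h₃ + h₄
    · linear_combination h₁
    · linear_combination h₂
    · linear_combination h₃

theorem exists_quartic_moments {G B : ℝ} (t₄ : ℝ) {t₆ : ℝ} (hGB : 0 < G ^ 2 + B ^ 2)
    (ht₆ : B = 0 → t₆ = 0) :
    ∃ (c₁ c₂ c₃ c₄ : ℝ) (y : ConvAlg (ℕ × ℕ)),
      y = c₁ • profile G B + c₂ • profile G B ^ 2 + c₃ • profile G B ^ 3 + c₄ • profile G B ^ 4 ∧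
      legMoment 2 0 y = 0 ∧ legMoment 2 1 y = 0 ∧ legMoment 4 1 y = t₄ ∧ legMoment 6 1 y = t₆ := by
  obtain ⟨c₁, c₂, c₃, c₄, h₁, h₂, h₃, h₄⟩ :=
    exists_quartic_system_solution (s₄ := t₄ / 2880) (s₆ := t₆ / (604800 * 2048 / 45045)) hGB
      fun hB => by simp [ht₆ hB]
  refine ⟨c₁, c₂, c₃, c₄, _, rfl, ?_, ?_, ?_, ?_⟩
  · rw [legMoment_two_zero_quartic, h₁, mul_zero]
  · rw [legMoment_two_one_quartic, h₂, mul_zero]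
  · rw [legMoment_four_one_quartic, h₃, mul_div_cancel₀ _ (by norm_num)]
  · rw [legMoment_six_one_quartic, h₄, mul_div_cancel₀ _ (by norm_num)]

theorem degree_eq_two_iff {p : ℕ × ℕ} : degree p = 2 ↔ p = (2, 0) ∨ p = (0, 1) := by
  simp only [degree, Prod.ext_iff]
  omega

/-- The linear map sending `(a, b)` to `a • x + b • y`. -/
def spanPair {E : Type*} [AddCommGroup E] [Module ℝ E] (x y : E) : ℝ × ℝ →ₗ[ℝ] E :=
  (LinearMap.toSpanSingleton ℝ E x).coprod (LinearMap.toSpanSingleton ℝ E y)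

/-- The coefficients of the two resonant monomials, `(cos θ / 64) ^ 2` and
`ε sin² θ cos 2φ`. -/
def resonantCoeffs : ConvAlg (ℕ × ℕ) →ₗ[ℝ] ℝ × ℝ :=
  ((pairing (single ((2, 0) : ℕ × ℕ))).prod (pairing (single ((0, 1) : ℕ × ℕ)))).toLinearMap

/-- The moments against the spherical harmonics of degree `2` and azimuthal order `0`, `2`, which
vanish on the range of the leading-order operator `nonresonantProj + polarDrop`. -/
def resonantMoments : ConvAlg (ℕ × ℕ) →ₗ[ℝ] ℝ × ℝ :=
  ((legMoment 2 0).prod (legMoment 2 1)).toLinearMap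

theorem nonresonantProj_add_polarDrop_toLinearMap :
    (nonresonantProj + polarDrop).toLinearMap
      = (1 + polarDrop).toLinearMap
        - spanPair (single (2, 0)) (single (0, 1)) ∘ₗ resonantCoeffs := by
  let P : ConvAlg (ℕ × ℕ) →L[ℝ] ConvAlg (ℕ × ℕ) :=
    (pairing (single ((2, 0) : ℕ × ℕ))).smulRight (single (2, 0))
      + (pairing (single ((0, 1) : ℕ × ℕ))).smulRight (single (0, 1))
  have hP : nonresonantProj = 1 - P := ext_single fun p => by
    by_cases hp : degree p = 2
    · rcases degree_eq_two_iff.1 hp with rfl | rfl <;> simp [nonresonantProj, P, hp]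
    · obtain ⟨h₁, h₂⟩ := not_or.1 (mt degree_eq_two_iff.2 hp)
      simp [nonresonantProj, P, hp, Ne.symm h₁, Ne.symm h₂]
  ext1 a
  simp only [hP, P, spanPair, resonantCoeffs, ContinuousLinearMap.coe_coe, add_apply, sub_apply,
    one_apply_eq_self, ContinuousLinearMap.smulRight_apply, LinearMap.sub_apply,
    LinearMap.comp_apply, ContinuousLinearMap.prod_apply, LinearMap.coprod_apply,
    LinearMap.toSpanSingleton_apply]
  abel

theorem bijective_one_add_polarDrop :
    Function.Bijective (1 + polarDrop : ConvAlg (ℕ × ℕ) →L[ℝ] ConvAlg (ℕ × ℕ)) := by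
  rw [← sub_neg_eq_add, ← ContinuousLinearMap.isUnit_iff_bijective]
  exact isUnit_one_sub_of_norm_lt_one (by rw [norm_neg]; exact norm_polarDrop_lt_one)

theorem resonantMoments_nonresonantProj_add_polarDrop (a : ConvAlg (ℕ × ℕ)) :
    resonantMoments (nonresonantProj a + polarDrop a) = 0 := by
  have h (j : ℕ) : legMoment 2 j (nonresonantProj a + polarDrop a) = 0 := by
    rw [legMoment_nonresonantProj_add_polarDrop]
    norm_num
  exact Prod.ext (h 0) (h 1)

theorem injective_of_det_ne_zero {a b c d : ℝ} (h : a * d - b * c ≠ 0) {f : ℝ × ℝ →ₗ[ℝ] ℝ × ℝ}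
    (hf : ∀ x y, f (x, y) = (a * x + b * y, c * x + d * y)) : Function.Injective f := by
  refine LinearMap.ker_eq_bot.1 (LinearMap.ker_eq_bot'.2 fun ⟨x, y⟩ hxy => ?_)
  obtain ⟨h₁, h₂⟩ : a * x + b * y = 0 ∧ c * x + d * y = 0 :=
    Prod.ext_iff.1 ((hf x y).symm.trans hxy)
  refine Prod.ext (mul_left_cancel₀ (b := x) (c := 0) h ?_)
    (mul_left_cancel₀ (b := y) (c := 0) h ?_)
  · linear_combination d * h₁ - b * h₂
  · linear_combination a * h₂ - c * h₁

theorem injective_resonantMoments_spanPair_single :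
    Function.Injective (resonantMoments ∘ₗ spanPair (single (2, 0)) (single (0, 1))) := by
  refine injective_of_det_ne_zero (a := 1 / 1920) (b := 0) (c := 0) (d := 128 / 5)
    (by norm_num) fun x y => ?_
  have h₀ := intUnit_X_pow_mul_legDeriv_two_zero 2
  have h₁ := intUnit_X_pow_mul_one_sub_sq_sq_mul_legDeriv_two_two 0
  simp only [intUnit_X_pow] at h₀ h₁
  rw [pow_zero, one_mul] at h₁
  norm_num [resonantMoments, spanPair, legMoment, moment_single, h₀, h₁]
  constructor <;> ring

theorem resonantMoments_spanPair_profile (G B x y : ℝ) :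
    resonantMoments (spanPair (profile G B) (profile G B ^ 2) (x, y))
      = (32 / 5 * B * x + (32 / 15 * G ^ 2 + 576 / 35 * B ^ 2) * y,
        128 / 5 * x + 768 / 35 * B * y) := by
  have h₀ := legMoment_two_zero_quartic G B x y 0 0
  have h₁ := legMoment_two_one_quartic G B x y 0 0
  simp only [zero_smul, add_zero] at h₀ h₁
  refine Prod.ext (h₀.trans ?_) (h₁.trans ?_) <;> ring

theorem bijective_resonantMoments_spanPair_profile {G B : ℝ} (hGB : 0 < G ^ 2 + B ^ 2) :
    Function.Bijective (resonantMoments ∘ₗ spanPair (profile G B) (profile G B ^ 2)) := by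
  have hdet : 32 / 5 * B * (768 / 35 * B) - (32 / 15 * G ^ 2 + 576 / 35 * B ^ 2) * (128 / 5) ≠ 0 :=
    ne_of_lt (by nlinarith)
  have hinj := injective_of_det_ne_zero hdet
    (f := resonantMoments ∘ₗ spanPair (profile G B) (profile G B ^ 2))
    (resonantMoments_spanPair_profile G B)
  exact ⟨hinj, LinearMap.injective_iff_surjective.1 hinj⟩

theorem bijective_bordered {G B : ℝ} (hGB : 0 < G ^ 2 + B ^ 2) :
    Function.Bijective (nonresonantProj + polarDrop
      - (pairing (single ((2, 0) : ℕ × ℕ))).smulRight (profile G B)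
      - (pairing (single ((0, 1) : ℕ × ℕ))).smulRight (profile G B ^ 2)) := by
  have hN := nonresonantProj_add_polarDrop_toLinearMap
  have h := bijective_sub_comp_sub_comp (σ := resonantMoments) (ℓ := resonantCoeffs)
    bijective_one_add_polarDrop (LinearMap.ext fun a => ?_)
    injective_resonantMoments_spanPair_single (bijective_resonantMoments_spanPair_profile hGB)
  · convert h using 1
    rw [← hN]
    funext a
    simp [spanPair, resonantCoeffs, sub_sub]
  · have ha := resonantMoments_nonresonantProj_add_polarDrop a
    have hNa : nonresonantProj a + polarDrop a = _ := congr($hN a)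
    rw [hNa] at ha
    exact sub_eq_zero.1 ((map_sub resonantMoments _ _).symm.trans ha)

theorem exists_leading_solution {G B t₄ t₆ : ℝ} (hGB : 0 < G ^ 2 + B ^ 2) (ht₆ : B = 0 → t₆ = 0) :
    ∃ (c₃ c₄ : ℝ) (x₀ : ConvAlg (ℕ × ℕ)),
      (nonresonantProj + polarDrop) x₀ = pairing (single (2, 0)) x₀ • profile G B
        + pairing (single (0, 1)) x₀ • profile G B ^ 2 + c₃ • profile G B ^ 3
        + c₄ • profile G B ^ 4 ∧
      legMoment 4 1 (shellResolvent x₀) = t₄ ∧ legMoment 6 1 (shellResolvent x₀) = t₆ := by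
  obtain ⟨c₁, c₂, c₃, c₄, y, hy, h₂₀, h₂₁, h₄₁, h₆₁⟩ :=
    exists_quartic_moments (-14 * t₄) (t₆ := -36 * t₆) hGB fun hB => by rw [ht₆ hB, mul_zero]
  obtain ⟨x₀, hx₀⟩ :=
    (bijective_bordered hGB).surjective (c₃ • profile G B ^ 3 + c₄ • profile G B ^ 4)
  have hN : (nonresonantProj + polarDrop) x₀ = pairing (single (2, 0)) x₀ • profile G B
      + pairing (single (0, 1)) x₀ • profile G B ^ 2 + c₃ • profile G B ^ 3
      + c₄ • profile G B ^ 4 := by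
    rw [add_assoc, ← hx₀]
    simp [sub_sub]
  have hNy : (nonresonantProj + polarDrop) x₀ - y
      = spanPair (profile G B) (profile G B ^ 2) (resonantCoeffs x₀ - (c₁, c₂)) := by
    simp only [hN, hy, spanPair, resonantCoeffs, ContinuousLinearMap.coe_coe,
      ContinuousLinearMap.prod_apply, LinearMap.coprod_apply, LinearMap.toSpanSingleton_apply,
      Prod.mk_sub_mk]
    module
  have hcoeffs : resonantCoeffs x₀ - (c₁, c₂) = 0 := by
    refine (bijective_resonantMoments_spanPair_profile hGB).injective ?_
    have hy₀ : resonantMoments y = 0 := Prod.ext h₂₀ h₂₁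
    have hx : resonantMoments ((nonresonantProj + polarDrop) x₀) = 0 :=
      resonantMoments_nonresonantProj_add_polarDrop x₀
    rw [LinearMap.comp_apply, ← hNy, map_sub, hx, hy₀, sub_zero, map_zero]
  rw [hcoeffs, map_zero, sub_eq_zero] at hNy
  have hmoment (n : ℕ) : legMoment n 1 y = (6 - n * (n + 1)) * legMoment n 1 (shellResolvent x₀) :=
    hNy ▸ legMoment_nonresonantProj_add_polarDrop n 1 x₀
  have h₄ := hmoment 4
  have h₆ := hmoment 6
  push_cast at h₄ h₆
  exact ⟨c₃, c₄, x₀, hN, by linarith, by linarith⟩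

variable {ε G B : ℝ}

/-- The series of the perturbed stream function: the zonal Rossby–Haurwitz stream function
`G cos θ + B (3 cos² θ - 1)`, the eigenfunction `ε sin² θ cos 2φ`, and the correction determined
by `x`. -/
def streamSeries (G B ε : ℝ) (x : ConvAlg (ℕ × ℕ)) : ConvAlg (ℕ × ℕ) :=
  profile G B - B • 1 + ε • shellResolvent x

theorem profile_sub_smul_one (G B : ℝ) :
    profile G B - B • 1 = (64 * G) • single (1, 0) + (12288 * B) • single (2, 0) + (-B) • single 0
      + single (0, 1) := by
  simp only [profile, map_add, map_mul, map_pow, Polynomial.aeval_C, Polynomial.aeval_X,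
    Algebra.algebraMap_eq_smul_one, _root_.smul_pow, single_pow, one_eq_single]
  norm_num [Prod.smul_mk]
  module

theorem toSphere_add (ε : ℝ) (a b : ConvAlg (ℕ × ℕ)) (θ φ : ℝ) :
    toSphere ε (a + b) θ φ = toSphere ε a θ φ + toSphere ε b θ φ :=
  map_add (pairing.flip (spherePoint ε (θ, φ))) a b

theorem toSphere_smul (ε c : ℝ) (a : ConvAlg (ℕ × ℕ)) (θ φ : ℝ) :
    toSphere ε (c • a) θ φ = c * toSphere ε a θ φ :=
  map_smul (pairing.flip (spherePoint ε (θ, φ))) c a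

theorem lapS_toSphere_add (hε : |ε| < 1) (a b : ConvAlg (ℕ × ℕ)) (θ φ : ℝ) :
    lapS (toSphere ε (a + b)) θ φ = lapS (toSphere ε a) θ φ + lapS (toSphere ε b) θ φ := by
  obtain ⟨L, hL⟩ := exists_lapS_toSphere_eq hε θ φ
  simp only [hL, map_add]

theorem lapS_toSphere_smul (hε : |ε| < 1) (c : ℝ) (a : ConvAlg (ℕ × ℕ)) (θ φ : ℝ) :
    lapS (toSphere ε (c • a)) θ φ = c * lapS (toSphere ε a) θ φ := by
  obtain ⟨L, hL⟩ := exists_lapS_toSphere_eq hε θ φ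
  simp only [hL, map_smul, smul_eq_mul]

theorem toSphere_pow (hε : |ε| < 1) (a : ConvAlg (ℕ × ℕ)) (k : ℕ) (θ φ : ℝ) :
    toSphere ε (a ^ k) θ φ = toSphere ε a θ φ ^ k := by
  induction k with
  | zero => simp [one_eq_single, toSphere_single hε]
  | succ k ih => rw [pow_succ, pow_succ, toSphere_mul hε, ih]

theorem toSphere_profile_sub_smul_one (hε : |ε| < 1) (G B θ φ : ℝ) :
    toSphere ε (profile G B - B • 1) θ φ = G * Real.cos θ + B * (3 * Real.cos θ ^ 2 - 1)
      + ε * Real.sin θ ^ 2 * Real.cos (2 * φ) := by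
  rw [profile_sub_smul_one]
  simp only [toSphere_add, toSphere_smul, toSphere_single hε, Prod.fst_zero, Prod.snd_zero]
  ring

theorem lapS_toSphere_profile_sub_smul_one (hε : |ε| < 1) (G B : ℝ) {θ : ℝ}
    (hθ : Real.sin θ ≠ 0) (φ : ℝ) :
    lapS (toSphere ε (profile G B - B • 1)) θ φ + 6 * toSphere ε (profile G B - B • 1) θ φ
      = 4 * G * Real.cos θ := by
  rw [toSphere_profile_sub_smul_one hε, profile_sub_smul_one]
  simp only [lapS_toSphere_add hε, lapS_toSphere_smul hε, lapS_toSphere_single hε _ hθ,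
    toSphere_single hε, degree, Prod.fst_zero, Prod.snd_zero]
  norm_num
  ring

theorem lapS_toSphere_streamSeries (hε : |ε| < 1) {c₁ c₂ c₃ c₄ : ℝ} {x : ConvAlg (ℕ × ℕ)}
    (hx : (nonresonantProj + polarDrop) x + ε ^ 2 • azimuthalDrop x
      = c₁ • (profile G B + ε • shellResolvent x) + c₂ • (profile G B + ε • shellResolvent x) ^ 2
        + c₃ • (profile G B + ε • shellResolvent x) ^ 3
        + c₄ • (profile G B + ε • shellResolvent x) ^ 4) {θ : ℝ} (hθ : Real.sin θ ≠ 0) (φ : ℝ) :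
    lapS (toSphere ε (streamSeries G B ε x)) θ φ - 4 * G * Real.cos θ
      = -6 * toSphere ε (streamSeries G B ε x) θ φ
        + ε * (c₁ * (toSphere ε (streamSeries G B ε x) θ φ + B)
          + c₂ * (toSphere ε (streamSeries G B ε x) θ φ + B) ^ 2
          + c₃ * (toSphere ε (streamSeries G B ε x) θ φ + B) ^ 3
          + c₄ * (toSphere ε (streamSeries G B ε x) θ φ + B) ^ 4) := by
  have hshift : toSphere ε (profile G B + ε • shellResolvent x) θ φ
      = toSphere ε (streamSeries G B ε x) θ φ + B := by
    have h : profile G B + ε • shellResolvent x = streamSeries G B ε x + B • 1 := by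
      rw [streamSeries]
      abel
    simp [h, toSphere_add, toSphere_smul, one_eq_single, toSphere_single hε]
  have hcorr := lapS_toSphere_shellResolvent hε x hθ φ
  rw [← add_apply, hx, toSphere_add, toSphere_add, toSphere_add, toSphere_smul, toSphere_smul,
    toSphere_smul, toSphere_smul, toSphere_pow hε, toSphere_pow hε, toSphere_pow hε,
    hshift] at hcorr
  have hprofile := lapS_toSphere_profile_sub_smul_one hε G B hθ φ
  have hsum : toSphere ε (streamSeries G B ε x) θ φ = _ := toSphere_add ε _ _ θ φ
  rw [toSphere_smul] at hsum
  rw [streamSeries, lapS_toSphere_add hε, lapS_toSphere_smul hε, ← streamSeries]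
  linear_combination hprofile + ε * hcorr + 6 * hsum

theorem exists_steady_series_near {t₄ t₆ : ℝ} (hGB : 0 < G ^ 2 + B ^ 2) (ht₆ : B = 0 → t₆ = 0) :
    ∃ (x₀ : ConvAlg (ℕ × ℕ)) (C r : ℝ), 0 < r ∧
      legMoment 4 1 (shellResolvent x₀) = t₄ ∧ legMoment 6 1 (shellResolvent x₀) = t₆ ∧
      ∀ ε : ℝ, |ε| ≤ r → ∃ (x : ConvAlg (ℕ × ℕ)) (F : ℝ → ℝ), ‖x - x₀‖ ≤ C * |ε| ∧
        (∀ t, AnalyticAt ℝ F t) ∧ ∀ θ, Real.sin θ ≠ 0 → ∀ φ,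
          lapS (toSphere ε (streamSeries G B ε x)) θ φ - 4 * G * Real.cos θ
            = F (toSphere ε (streamSeries G B ε x) θ φ) := by
  obtain ⟨c₃, c₄, x₀, hx₀, h₄, h₆⟩ := exists_leading_solution (t₄ := t₄) hGB ht₆
  obtain ⟨C, r, hr, hsol⟩ := exists_solution_near_of_bijective (nonresonantProj + polarDrop)
    azimuthalDrop shellResolvent _ _ c₃ c₄ (bijective_bordered hGB) hx₀
  refine ⟨x₀, C, min r (1 / 2), by positivity, h₄, h₆, fun ε hε => ?_⟩
  obtain ⟨x, hx, heq⟩ := hsol ε (hε.trans (min_le_left _ _))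
  have hε₁ : |ε| < 1 := (hε.trans (min_le_right _ _)).trans_lt (by norm_num)
  refine ⟨x, fun t => -6 * t + ε * (pairing (single (2, 0)) x * (t + B)
    + pairing (single (0, 1)) x * (t + B) ^ 2 + c₃ * (t + B) ^ 3 + c₄ * (t + B) ^ 4),
    hx, fun t => by fun_prop, fun θ hθ φ => lapS_toSphere_streamSeries hε₁ heq hθ φ⟩

end ConvAlg

section Polynomials

open Polynomial

/-! ### Spherical harmonics -/

theorem intUnit_X_pow_mul_legDeriv {n m i : ℕ} (h : i + m < n) :
    intUnit (X ^ i * ((1 - X ^ 2) ^ m * legDeriv n m)) = 0 := by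
  induction i using Nat.strong_induction_on with
  | _ i ih =>
    have hrec := intUnit_ultraspherical_mul m (X ^ i) (legDeriv n m)
    simp only [ultraspherical_X_pow, ultraspherical_legDeriv, mul_smul_comm, sub_mul,
      smul_mul_assoc, map_sub, map_smul, smul_eq_mul] at hrec
    have hlow :
        (i * (i - 1) : ℝ) * intUnit (X ^ (i - 2) * ((1 - X ^ 2) ^ m * legDeriv n m)) = 0 := by
      rcases i with _ | _ | i
      · simp
      · simp
      · rw [ih (i + 1 + 1 - 2) (by omega) (by omega), mul_zero]
    have hne : (n * (n + 1) - (i + m) * (i + m + 1) : ℝ) ≠ 0 := by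
      have hlt : (i + m : ℝ) + 1 ≤ n := by exact_mod_cast h
      nlinarith [(by positivity : (0 : ℝ) ≤ i + m)]
    refine (mul_eq_zero.1 ?_).resolve_left hne
    linear_combination hrec - hlow

theorem intUnit_mul_legDeriv_eq_zero {n m : ℕ} {f : ℝ[X]} (h : f.natDegree + m < n) :
    intUnit (f * ((1 - X ^ 2) ^ m * legDeriv n m)) = 0 := by
  rw [f.as_sum_range_C_mul_X_pow, Finset.sum_mul, map_sum]
  refine Finset.sum_eq_zero fun i hi => ?_
  rw [mul_assoc, intUnit_C_mul, intUnit_X_pow_mul_legDeriv, mul_zero]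
  grind

theorem iterate_derivative_legDeriv (n k m : ℕ) :
    derivative^[k] (legDeriv n m) = legDeriv n (k + m) := by
  rw [legDeriv, legDeriv, ← Function.iterate_add_apply]
  rw [add_left_comm]

theorem abs_eval_legDeriv_le (n m : ℕ) {s : ℝ} (hs : |s| ≤ 1) :
    |(legDeriv n m).eval s| ≤ 2 ^ n * (2 * n).descFactorial (n + m) := by
  rw [legDeriv_eq_sum, eval_finsetSum]
  have hterm (i : ℕ) (hi : i ∈ Finset.range (n + 1)) :
      |(((-1) ^ (n - i) * n.choose i * (2 * i).descFactorial (n + m) : ℝ) •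
        (X : ℝ[X]) ^ (2 * i - (n + m))).eval s|
        ≤ n.choose i * (2 * n).descFactorial (n + m) := by
    have hmono : (2 * i).descFactorial (n + m) ≤ (2 * n).descFactorial (n + m) :=
      Nat.descFactorial_le _ (by grind)
    simp only [eval_smul, eval_pow, eval_X, smul_eq_mul, abs_mul, abs_pow, abs_neg, abs_one,
      one_pow, one_mul, Nat.abs_cast]
    refine (mul_le_of_le_one_right (by positivity) (pow_le_one₀ (abs_nonneg s) hs)).trans ?_
    gcongr
  refine (Finset.abs_sum_le_sum_abs _ _).trans ((Finset.sum_le_sum hterm).trans_eq ?_)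
  rw [← Finset.sum_mul, ← Nat.cast_sum, Nat.sum_range_choose]
  norm_num

theorem iteratedDeriv_eval (k : ℕ) (p : ℝ[X]) :
    iteratedDeriv k (fun s => p.eval s) = fun s => (derivative^[k] p).eval s := by
  induction k with
  | zero => simp
  | succ k ih =>
    ext s
    rw [iteratedDeriv_succ, ih, Polynomial.deriv, Function.iterate_succ_apply']

theorem iteratedDeriv_legP (n m : ℕ) :
    iteratedDeriv m (legP n) = fun s => (legDeriv n m).eval s / (2 ^ n * n.factorial) := by
  have hP : legP n = fun s => (C (1 / (2 ^ n * n.factorial : ℝ)) * legDeriv n 0).eval s := by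
    ext s
    have hR : (fun x : ℝ => (x ^ 2 - 1) ^ n) = fun x => ((X ^ 2 - 1 : ℝ[X]) ^ n).eval x := by simp
    rw [legP, hR, iteratedDeriv_eval, eval_mul, eval_C, legDeriv, add_zero]
  ext s
  rw [hP, iteratedDeriv_eval]
  simp only [iterate_derivative_C_mul, iterate_derivative_legDeriv, eval_mul, eval_C, add_zero,
    one_div_mul_eq_div]

theorem one_sub_cos_sq_rpow (θ : ℝ) (k : ℕ) :
    (1 - Real.cos θ ^ 2) ^ ((k : ℝ) / 2) = |Real.sin θ| ^ k := by
  rw [← Real.sin_sq, ← sq_abs, ← Real.rpow_natCast, ← Real.rpow_mul (abs_nonneg _),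
    ← Real.rpow_natCast]
  congr 1
  push_cast
  ring

/-- The factor in front of `|sin θ| ^ k * (legDeriv n k).eval (cos θ)` in `Y_n^{±k}`. -/
def ynmConst (n k : ℕ) : ℝ :=
  (if k = 0 then 1 else √2) * √((2 * n + 1) / (4 * Real.pi)
    * ((n - k).factorial / (n + k).factorial)) / (2 ^ n * n.factorial)

/-- The colatitude factor of `Y_n^{±k}`. -/
def polarFactor (n k : ℕ) (θ : ℝ) : ℝ :=
  ynmConst n k * |Real.sin θ| ^ k * (legDeriv n k).eval (Real.cos θ)

/-- The longitude factor of `Y_n^m`, a cosine for `0 ≤ m` and a sine for `m < 0`. -/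
def azimuthal (m : ℤ) (φ : ℝ) : ℝ :=
  Real.cos (m.natAbs * φ + if m < 0 then -(Real.pi / 2) else 0)

theorem Ynm_eq_polarFactor_mul_azimuthal (n : ℕ) (m : ℤ) (θ φ : ℝ) :
    Ynm n m θ φ = polarFactor n m.natAbs θ * azimuthal m φ := by
  have hsign : (-1 : ℝ) ^ m.natAbs * (-1) ^ m.natAbs = 1 := by rw [← mul_pow]; norm_num
  simp only [Ynm, polarFactor, ynmConst, azimuthal, assocLegP, one_sub_cos_sq_rpow,
    iteratedDeriv_legP]
  rcases lt_trichotomy m 0 with hm | rfl | hm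
  · rw [if_neg hm.ne, if_neg hm.le.not_gt, if_neg (by omega), if_pos hm, ← sub_eq_add_neg,
      Real.cos_sub_pi_div_two]
    linear_combination (√2 * √((2 * n + 1) / (4 * Real.pi) * ((n - m.natAbs).factorial
      / (n + m.natAbs).factorial)) * |Real.sin θ| ^ m.natAbs
      * ((legDeriv n m.natAbs).eval (Real.cos θ) / (2 ^ n * n.factorial))
      * Real.sin (m.natAbs * φ)) * hsign
  · have hfact : ((n.factorial : ℝ)) / n.factorial = 1 := div_self (by positivity)
    rw [← iteratedDeriv_zero (f := legP n), iteratedDeriv_legP]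
    simp only [↓reduceIte, Int.natAbs_zero, tsub_zero, add_zero, hfact, mul_one, pow_zero,
      Nat.cast_zero, zero_mul, lt_self_iff_false, Real.cos_zero]
    ring
  · rw [if_neg hm.ne', if_pos hm, if_neg (by omega), if_neg hm.le.not_gt, add_zero]
    linear_combination (√2 * √((2 * n + 1) / (4 * Real.pi) * ((n - m.natAbs).factorial
      / (n + m.natAbs).factorial)) * |Real.sin θ| ^ m.natAbs
      * ((legDeriv n m.natAbs).eval (Real.cos θ) / (2 ^ n * n.factorial))
      * Real.cos (m.natAbs * φ)) * hsign

theorem ynmConst_nonneg (n k : ℕ) : 0 ≤ ynmConst n k := by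
  rw [ynmConst]
  split_ifs <;> positivity

theorem ynmConst_sq (n k : ℕ) :
    ynmConst n k ^ 2 = (if k = 0 then 1 else 2) * ((2 * n + 1) / (4 * Real.pi)
      * ((n - k).factorial / (n + k).factorial)) / (2 ^ n * n.factorial) ^ 2 := by
  rw [ynmConst, div_pow, mul_pow, ite_pow, one_pow, Real.sq_sqrt zero_le_two,
    Real.sq_sqrt (by positivity)]

theorem ynmConst_sq_le (n k : ℕ) :
    ynmConst n k ^ 2
      ≤ (n + 1) ^ 2 * ((n - k).factorial / (n + k).factorial) / (2 ^ n * n.factorial) ^ 2 := by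
  have hc : (if k = 0 then 1 else 2 : ℝ) ≤ 2 := by split_ifs <;> norm_num
  have hn : 2 * ((2 * n + 1) / (4 * Real.pi)) ≤ ((n : ℝ) + 1) ^ 2 := by
    rw [mul_div_assoc', div_le_iff₀ (by positivity)]
    nlinarith [Real.pi_gt_three, (n.cast_nonneg : (0 : ℝ) ≤ n)]
  rw [ynmConst_sq, ← mul_assoc]
  gcongr
  exact (mul_le_mul_of_nonneg_right hc (by positivity)).trans hn

theorem factorial_add_mul_factorial_sub_mul_choose {n k : ℕ} (hk : k ≤ n) :
    (n + k).factorial * (n - k).factorial * (2 * n).choose (n + k)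
      = n.centralBinom * n.factorial ^ 2 := by
  have h := Nat.choose_mul_factorial_mul_factorial (show n + k ≤ 2 * n by omega)
  have h₀ := Nat.choose_mul_factorial_mul_factorial (show n ≤ 2 * n by omega)
  rw [show 2 * n - (n + k) = n - k by omega] at h
  rw [show 2 * n - n = n by omega] at h₀
  rw [Nat.centralBinom]
  linarith

theorem ynmConst_mul_descFactorial_le (n k : ℕ) :
    ynmConst n k * (2 ^ n * (2 * n).descFactorial (n + k)) ≤ (n + 1) * 4 ^ n := by
  rcases lt_or_ge n k with hk | hk
  · rw [Nat.descFactorial_of_lt (by omega), Nat.cast_zero, mul_zero, mul_zero]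
    positivity
  have hfact : ((n + k).factorial * (n - k).factorial * (2 * n).choose (n + k) : ℝ)
      = n.centralBinom * n.factorial ^ 2 := by
    exact_mod_cast factorial_add_mul_factorial_sub_mul_choose hk
  have hcentral : (n.centralBinom : ℝ) ≤ 4 ^ n := by exact_mod_cast n.centralBinom_le_four_pow
  have hchoose : ((2 * n).choose (n + k) : ℝ) ≤ n.centralBinom := by
    exact_mod_cast Nat.choose_le_centralBinom _ n
  refine le_of_sq_le_sq ?_ (by positivity)
  calc (ynmConst n k * (2 ^ n * (2 * n).descFactorial (n + k))) ^ 2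
    _ ≤ (n + 1) ^ 2 * ((n - k).factorial / (n + k).factorial) / (2 ^ n * n.factorial) ^ 2
        * (2 ^ n * (2 * n).descFactorial (n + k)) ^ 2 := by
      rw [mul_pow]
      gcongr
      exact ynmConst_sq_le n k
    _ = (n + 1) ^ 2 * (n.centralBinom * (2 * n).choose (n + k)) := by
      rw [Nat.descFactorial_eq_factorial_mul_choose, Nat.cast_mul]
      field_simp
      linear_combination (2 * n).choose (n + k) * hfact
    _ ≤ (n + 1) ^ 2 * (4 ^ n * 4 ^ n) := by
      gcongr
      exact hchoose.trans hcentral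
    _ = ((n + 1) * 4 ^ n) ^ 2 := by ring

theorem abs_polarFactor_le (n k : ℕ) (θ : ℝ) : |polarFactor n k θ| ≤ (n + 1) * 4 ^ n := by
  refine le_trans ?_ (ynmConst_mul_descFactorial_le n k)
  rw [polarFactor, abs_mul, abs_mul, abs_pow, abs_abs, abs_of_nonneg (ynmConst_nonneg n k)]
  have hK := ynmConst_nonneg n k
  gcongr
  · exact mul_le_of_le_one_right hK (pow_le_one₀ (abs_nonneg _) (Real.abs_sin_le_one θ))
  · exact abs_eval_legDeriv_le n k (Real.abs_cos_le_one θ)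

theorem abs_Ynm_le (n : ℕ) (m : ℤ) (θ φ : ℝ) : |Ynm n m θ φ| ≤ (n + 1) * 4 ^ n := by
  rw [Ynm_eq_polarFactor_mul_azimuthal, abs_mul]
  exact (mul_le_of_le_one_right (abs_nonneg _) (Real.abs_cos_le_one _)).trans
    (abs_polarFactor_le _ _ _)

theorem continuous_polarFactor (n k : ℕ) : Continuous (polarFactor n k) := by
  unfold polarFactor
  fun_prop

theorem continuous_azimuthal (m : ℤ) : Continuous (azimuthal m) := by
  unfold azimuthal
  fun_prop

theorem continuous_Ynm (n : ℕ) (m : ℤ) : Continuous (Function.uncurry (Ynm n m)) := by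
  unfold Function.uncurry
  simp only [Ynm_eq_polarFactor_mul_azimuthal]
  exact ((continuous_polarFactor n m.natAbs).comp continuous_fst).mul
    ((continuous_azimuthal m).comp continuous_snd)

/-! ### Integrals over colatitude and longitude -/

theorem integral_eval_cos_mul_sin (p : ℝ[X]) :
    ∫ θ in (0 : ℝ)..Real.pi, p.eval (Real.cos θ) * Real.sin θ = intUnit p := by
  have h := intervalIntegral.integral_comp_mul_deriv (a := 0) (b := Real.pi)
    (fun θ _ => Real.hasDerivAt_cos θ) Real.continuous_sin.neg.continuousOn p.continuous
  rw [Real.cos_zero, Real.cos_pi, intervalIntegral.integral_symm (-1) 1] at h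
  rw [intUnit_apply, ← neg_inj, ← h, ← intervalIntegral.integral_neg]
  simp

theorem integral_polarFactor (i j l n : ℕ) :
    ∫ θ in (0 : ℝ)..Real.pi, Real.cos θ ^ i * Real.sin θ ^ (2 * j) * polarFactor n (2 * l) θ
        * Real.sin θ
      = ynmConst n (2 * l) * intUnit (X ^ i * ((1 - X ^ 2) ^ (j + l) * legDeriv n (2 * l))) := by
  rw [← integral_eval_cos_mul_sin, ← intervalIntegral.integral_const_mul]
  congr 1
  ext θ
  simp only [polarFactor, eval_mul, eval_pow, eval_sub, eval_X, eval_one, ← Real.sin_sq,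
    pow_mul |Real.sin θ|, sq_abs]
  ring

theorem integral_polarFactor_eq_zero {i j l n : ℕ} (hl : l ≤ j) (h : i + 2 * j < n) :
    ∫ θ in (0 : ℝ)..Real.pi, Real.cos θ ^ i * Real.sin θ ^ (2 * j) * polarFactor n (2 * l) θ
      * Real.sin θ = 0 := by
  have hdeg : (X ^ i * (1 - X ^ 2) ^ (j - l) : ℝ[X]).natDegree + 2 * l < n := by
    have : (X ^ i * (1 - X ^ 2) ^ (j - l) : ℝ[X]).natDegree ≤ i + (j - l) * 2 := by compute_degree
    omega
  have hsplit : j + l = j - l + 2 * l := by omega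
  rw [integral_polarFactor, hsplit, pow_add, mul_assoc _ _ (legDeriv n (2 * l)), ← mul_assoc,
    intUnit_mul_legDeriv_eq_zero hdeg, mul_zero]

theorem integral_cos_int_mul_add {k : ℤ} (hk : k ≠ 0) (δ : ℝ) :
    ∫ φ in (0 : ℝ)..2 * Real.pi, Real.cos (k * φ + δ) = 0 := by
  rw [intervalIntegral.integral_comp_mul_add Real.cos (Int.cast_ne_zero.2 hk), integral_cos,
    add_comm (_ * (2 * Real.pi)), Real.sin_add_int_mul_two_pi]
  simp

theorem integral_cos_two_mul_pow_mul_cos {j : ℕ} {k : ℤ} (h : Odd k ∨ 2 * (j : ℤ) < |k|) (δ : ℝ) :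
    ∫ φ in (0 : ℝ)..2 * Real.pi, Real.cos (2 * φ) ^ j * Real.cos (k * φ + δ) = 0 := by
  induction j generalizing k with
  | zero =>
    have hk : k ≠ 0 := by
      rintro rfl
      simp at h
    simpa using integral_cos_int_mul_add hk δ
  | succ j ih =>
    have hprod (φ : ℝ) : Real.cos (2 * φ) ^ (j + 1) * Real.cos (k * φ + δ)
        = 1 / 2 * (Real.cos (2 * φ) ^ j * Real.cos ((k + 2 : ℤ) * φ + δ))
          + 1 / 2 * (Real.cos (2 * φ) ^ j * Real.cos ((k - 2 : ℤ) * φ + δ)) := by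
      have hadd : ((k + 2 : ℤ) * φ + δ) = (k * φ + δ) + 2 * φ := by
        push_cast
        ring
      have hsub : ((k - 2 : ℤ) * φ + δ) = (k * φ + δ) - 2 * φ := by
        push_cast
        ring
      rw [hadd, hsub, Real.cos_add (k * φ + δ), Real.cos_sub (k * φ + δ)]
      ring
    simp only [hprod]
    rw [intervalIntegral.integral_add (Continuous.intervalIntegrable (by fun_prop) _ _)
      (Continuous.intervalIntegrable (by fun_prop) _ _), intervalIntegral.integral_const_mul,
      intervalIntegral.integral_const_mul, ih (by grind), ih (by grind)]
    simp

theorem integral_cos_two_mul_pow_mul_azimuthal {j : ℕ} {m : ℤ}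
    (h : Odd m ∨ 2 * (j : ℤ) < |m|) :
    ∫ φ in (0 : ℝ)..2 * Real.pi, Real.cos (2 * φ) ^ j * azimuthal m φ = 0 := by
  have hm : Odd (m.natAbs : ℤ) ∨ 2 * (j : ℤ) < |(m.natAbs : ℤ)| := by
    rwa [Int.odd_coe_nat, Int.natAbs_odd, Int.natCast_natAbs, abs_abs]
  simpa only [azimuthal, Int.cast_natCast] using
    integral_cos_two_mul_pow_mul_cos hm (if m < 0 then -(Real.pi / 2) else 0)

theorem integral_cos_two_mul_mul_azimuthal_two :
    ∫ φ in (0 : ℝ)..2 * Real.pi, Real.cos (2 * φ) * azimuthal 2 φ = Real.pi := by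
  have hsq (φ : ℝ) : Real.cos (2 * φ) * azimuthal 2 φ
      = 1 / 2 + 1 / 2 * Real.cos ((4 : ℤ) * φ + 0) := by
    have h4 : ((4 : ℤ) * φ + 0 : ℝ) = 2 * (2 * φ) := by
      push_cast
      ring
    rw [h4, Real.cos_two_mul (2 * φ)]
    simp only [azimuthal, Int.reduceAbs, Nat.cast_ofNat, Int.reduceLT, ↓reduceIte, add_zero]
    ring
  simp only [hsq]
  rw [intervalIntegral.integral_add (Continuous.intervalIntegrable (by fun_prop) _ _)
    (Continuous.intervalIntegrable (by fun_prop) _ _), intervalIntegral.integral_const_mul,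
    integral_cos_int_mul_add (by norm_num)]
  simp only [one_div, intervalIntegral.integral_const, sub_zero, smul_eq_mul, mul_zero, add_zero]
  ring

end Polynomials

/-! ### Spherical harmonic coefficients -/

theorem exists_sInner_clm_eq {E : Type*} [NormedAddCommGroup E] [NormedSpace ℝ E]
    [CompleteSpace E] {g : ℝ × ℝ → E} (hg : Continuous g) {v : SphereFun}
    (hv : Continuous (Function.uncurry v)) :
    ∃ w : E, ∀ L : E →L[ℝ] ℝ, sInner (fun θ φ => L (g (θ, φ))) v = L w := by
  have hf : Continuous fun q : ℝ × ℝ => (v q.2 q.1 * Real.sin q.2) • g (q.2, q.1) := by fun_prop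
  have hφ : Continuous fun φ => ∫ θ in (0 : ℝ)..Real.pi, (v θ φ * Real.sin θ) • g (θ, φ) :=
    intervalIntegral.continuous_parametric_intervalIntegral_of_continuous' hf _ _
  refine ⟨∫ φ in (0 : ℝ)..(2 * Real.pi), ∫ θ in (0 : ℝ)..Real.pi,
    (v θ φ * Real.sin θ) • g (θ, φ), fun L => ?_⟩
  rw [← L.intervalIntegral_comp_comm (hφ.intervalIntegrable _ _)]
  refine intervalIntegral.integral_congr fun φ _ => ?_
  have hθ : Continuous fun θ => (v θ φ * Real.sin θ) • g (θ, φ) := by fun_prop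
  simp only [← L.intervalIntegral_comp_comm (hθ.intervalIntegrable _ _), map_smul, smul_eq_mul]
  congr! 2
  ring

theorem exists_coeff_clm_eq {E : Type*} [NormedAddCommGroup E] [NormedSpace ℝ E] [CompleteSpace E]
    {g : ℝ × ℝ → E} (hg : Continuous g) (n : ℕ) (m : ℤ) :
    ∃ w : E, ∀ L : E →L[ℝ] ℝ, coeff (fun θ φ => L (g (θ, φ))) n m = L w :=
  exists_sInner_clm_eq hg (continuous_Ynm n m)

theorem coeff_mul_eq (f g : ℝ → ℝ) (n : ℕ) (m : ℤ) :
    coeff (fun θ φ => f θ * g φ) n m =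
      (∫ θ in (0 : ℝ)..Real.pi, f θ * polarFactor n m.natAbs θ * Real.sin θ) *
        ∫ φ in (0 : ℝ)..(2 * Real.pi), g φ * azimuthal m φ := by
  rw [coeff, sInner, ← intervalIntegral.integral_const_mul]
  congr! 2
  rw [← intervalIntegral.integral_mul_const]
  congr! 2
  rw [Ynm_eq_polarFactor_mul_azimuthal]
  ring

theorem abs_coeff_le {u : SphereFun} {A : ℝ} (h : ∀ θ φ, |u θ φ| ≤ A) (n : ℕ) (m : ℤ) :
    |coeff u n m| ≤ A * ((n + 1) * 4 ^ n) * (2 * Real.pi ^ 2) := by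
  have hA : 0 ≤ A := (abs_nonneg _).trans (h 0 0)
  have hθ (φ : ℝ) : ‖∫ θ in (0 : ℝ)..Real.pi, u θ φ * Ynm n m θ φ * Real.sin θ‖ ≤
      A * ((n + 1) * 4 ^ n) * |Real.pi - 0| := by
    refine intervalIntegral.norm_integral_le_of_norm_le_const fun θ _ => ?_
    rw [norm_mul, norm_mul]
    refine mul_le_of_le_one_right (by positivity) (Real.abs_sin_le_one θ) |>.trans ?_
    exact mul_le_mul (h θ φ) (abs_Ynm_le n m θ φ) (abs_nonneg _) hA
  refine (intervalIntegral.norm_integral_le_of_norm_le_const fun φ _ => hθ φ).trans_eq ?_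
  rw [sub_zero, sub_zero, abs_of_pos Real.pi_pos, abs_of_pos Real.two_pi_pos]
  ring

namespace ConvAlg

variable {ε : ℝ}

theorem exists_coeff_toSphere_eq (hε : |ε| < 1) (n : ℕ) (m : ℤ) :
    ∃ L : ConvAlg (ℕ × ℕ) →L[ℝ] ℝ, ∀ a, coeff (toSphere ε a) n m = L a := by
  obtain ⟨w, hw⟩ := exists_coeff_clm_eq (contDiff_spherePoint hε).continuous n m
  exact ⟨pairing.flip w, fun a => hw (pairing a)⟩

theorem coeff_toSphere_single (hε : |ε| < 1) (p : ℕ × ℕ) (n : ℕ) (m : ℤ) :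
    coeff (toSphere ε (single p)) n m = 64⁻¹ ^ p.1 * ε ^ p.2 *
      ((∫ θ in (0 : ℝ)..Real.pi,
        Real.cos θ ^ p.1 * Real.sin θ ^ (2 * p.2) * polarFactor n m.natAbs θ * Real.sin θ) *
        ∫ φ in (0 : ℝ)..(2 * Real.pi), Real.cos (2 * φ) ^ p.2 * azimuthal m φ) := by
  have h : toSphere ε (single p) = fun θ φ =>
      (64⁻¹ ^ p.1 * ε ^ p.2 * (Real.cos θ ^ p.1 * Real.sin θ ^ (2 * p.2))) *
        Real.cos (2 * φ) ^ p.2 := by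
    ext θ φ
    rw [toSphere_single hε]
    ring
  rw [h, coeff_mul_eq, ← mul_assoc (_ * _),
    ← intervalIntegral.integral_const_mul (64⁻¹ ^ p.1 * ε ^ p.2)]
  simp only [mul_assoc]

theorem coeff_toSphere_single_eq_zero (hε : |ε| < 1) {p : ℕ × ℕ} {n : ℕ} (h : degree p < n)
    (m : ℤ) : coeff (toSphere ε (single p)) n m = 0 := by
  rw [coeff_toSphere_single hε]
  by_cases hm : Odd m ∨ 2 * (p.2 : ℤ) < |m|
  · rw [integral_cos_two_mul_pow_mul_azimuthal hm, mul_zero, mul_zero]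
  · rw [not_or, Int.not_odd_iff_even, not_lt] at hm
    obtain ⟨l, hl⟩ := Int.natAbs_even.2 hm.1
    rw [← Int.natCast_natAbs] at hm
    rw [hl, ← two_mul, integral_polarFactor_eq_zero (by omega) h, zero_mul, mul_zero]

theorem abs_toSphere_single_le (hε : |ε| < 1) (p : ℕ × ℕ) (θ φ : ℝ) :
    |toSphere ε (single p) θ φ| ≤ (4096 * |ε|) ^ p.2 / 64 ^ degree p := by
  have hc : |Real.cos θ / 64| ≤ 1 / 64 := by
    rw [abs_div, abs_of_pos (by norm_num : (0 : ℝ) < 64)]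
    gcongr
    exact Real.abs_cos_le_one θ
  rw [toSphere_single hε, abs_mul, abs_pow, abs_pow]
  calc _ ≤ (1 / 64) ^ p.1 * |ε| ^ p.2 :=
        mul_le_mul (pow_le_pow_left₀ (abs_nonneg _) hc _)
          (pow_le_pow_left₀ (abs_nonneg _) (abs_mul_sin_sq_mul_cos_le ε θ φ) _)
          (by positivity) (by positivity)
    _ = _ := by
      rw [degree, pow_add, pow_mul, mul_pow, one_div_pow]
      norm_num
      field_simp

theorem abs_coeff_toSphere_single_le (hε : |ε| < 1) (p : ℕ × ℕ) (n : ℕ) (m : ℤ) :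
    |coeff (toSphere ε (single p)) n m| ≤
      (4096 * |ε|) ^ p.2 * ((n + 1) / 16 ^ n * (2 * Real.pi ^ 2)) := by
  rcases lt_or_ge (degree p) n with h | h
  · rw [coeff_toSphere_single_eq_zero hε h, abs_zero]
    positivity
  · refine (abs_coeff_le (abs_toSphere_single_le hε p) n m).trans ?_
    calc _ ≤ (4096 * |ε|) ^ p.2 / 64 ^ n * ((n + 1) * 4 ^ n) * (2 * Real.pi ^ 2) := by
          gcongr
          norm_num
      _ = _ := by
        rw [show (64 : ℝ) = 16 * 4 by norm_num, mul_pow (16 : ℝ)]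
        field_simp

theorem abs_coeff_toSphere_le (hε : |ε| ≤ 1 / 4096) (a : ConvAlg (ℕ × ℕ)) (n : ℕ) (m : ℤ) :
    |coeff (toSphere ε a) n m| ≤ (n + 1) / 16 ^ n * (2 * Real.pi ^ 2) * ‖a‖ := by
  have hε' : |ε| < 1 := hε.trans_lt (by norm_num)
  obtain ⟨L, hL⟩ := exists_coeff_toSphere_eq hε' n m
  rw [hL]
  refine L.le_of_opNorm_le (opNorm_le_of_single fun p => ?_) a
  rw [← hL]
  refine (abs_coeff_toSphere_single_le hε' p n m).trans (mul_le_of_le_one_left (by positivity) ?_)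
  exact pow_le_one₀ (by positivity) (by linarith)

theorem coeff_toSphere_single_two (hε : |ε| < 1) (i n : ℕ) :
    coeff (toSphere ε (single (i, 1))) n 2 =
      ε * (Real.pi * ynmConst n 2 * legMoment n 1 (single (i, 1))) := by
  have hθ := integral_polarFactor i 1 1 n
  rw [mul_one] at hθ
  rw [coeff_toSphere_single hε, legMoment, moment_single, if_pos rfl]
  simp only [pow_one, mul_one, integral_cos_two_mul_mul_azimuthal_two,
    show (2 : ℤ).natAbs = 2 from rfl, hθ]
  ring

theorem abs_coeff_toSphere_two_sub_le (hε : |ε| ≤ 1 / 4096) (a : ConvAlg (ℕ × ℕ)) (n : ℕ) :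
    |coeff (toSphere ε a) n 2 - ε * (Real.pi * ynmConst n 2 * legMoment n 1 a)| ≤
      (4096 * ε) ^ 2 * ((n + 1) / 16 ^ n * (2 * Real.pi ^ 2)) * ‖a‖ := by
  have hε' : |ε| < 1 := hε.trans_lt (by norm_num)
  obtain ⟨L, hL⟩ := exists_coeff_toSphere_eq hε' n 2
  rw [hL]
  refine (L - (ε * (Real.pi * ynmConst n 2)) • legMoment n 1).le_of_opNorm_le
    (opNorm_le_of_single fun p => ?_) a |>.trans' (le_of_eq ?_)
  swap
  · simp [mul_assoc]
  rw [sub_apply, smul_apply, smul_eq_mul, ← hL, Real.norm_eq_abs]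
  obtain ⟨i, j⟩ := p
  rcases eq_or_ne j 1 with rfl | hj
  · rw [coeff_toSphere_single_two hε', ← mul_assoc ε, sub_self, abs_zero]
    positivity
  rw [legMoment, moment_single, if_neg hj, mul_zero, sub_zero]
  rcases j.eq_zero_or_pos with rfl | hj₀
  · rw [coeff_toSphere_single hε', integral_cos_two_mul_pow_mul_azimuthal (.inr (by simp)),
      mul_zero, mul_zero, abs_zero]
    positivity
  · refine (abs_coeff_toSphere_single_le hε' _ n 2).trans ?_
    rw [← sq_abs (4096 * ε), abs_mul, abs_of_pos (by norm_num : (0 : ℝ) < 4096)]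
    refine mul_le_mul_of_nonneg_right ?_ (by positivity)
    exact pow_le_pow_of_le_one (by positivity) (by linarith) (by omega)

end ConvAlg

/-! ### Gevrey bounds -/

theorem summable_pow_mul_geometric_natAbs (k : ℕ) {q : ℝ} (hq₀ : 0 < q) (hq : q < 1) :
    Summable fun p : ℕ × ℤ => ((p.1 + 1 : ℝ) ^ k * q ^ p.1) * q ^ p.2.natAbs := by
  refine Summable.mul_of_nonneg (f := fun n : ℕ => (n + 1 : ℝ) ^ k * q ^ n)
    (g := fun m : ℤ => q ^ m.natAbs) ?_ ?_ (fun _ => by positivity) fun _ => by positivity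
  · have h := summable_pow_mul_geometric_of_norm_lt_one k
      ((Real.norm_of_nonneg hq₀.le).trans_lt hq)
    refine (((summable_nat_add_iff 1).2 h).mul_left q⁻¹).congr fun n => ?_
    rw [pow_succ']
    push_cast
    field_simp
  · exact .of_nat_of_neg (by simpa using summable_geometric_of_lt_one hq₀.le hq)
      (by simpa using summable_geometric_of_lt_one hq₀.le hq)

theorem sqrt_muSp_le (n : ℕ) : √(muSp n) ≤ n + 1 := by
  rw [Real.sqrt_le_left (by positivity), muSp]
  nlinarith

theorem gevrey_weight_mul_sq_le {lam r A x : ℝ} (hlam : 0 ≤ lam) (hr : 0 ≤ r)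
    (hq : Real.exp lam * r ≤ 1) {n k : ℕ} (hk : k ≤ n) (hx : |x| ≤ A * ((n + 1) * r ^ n)) :
    muSp n ^ 2 * Real.exp (2 * lam * √(muSp n)) * x ^ 2 ≤
      (Real.exp lam * A) ^ 2 *
        ((n + 1 : ℝ) ^ 6 * (Real.exp lam * r) ^ n * (Real.exp lam * r) ^ k) := by
  have hμ : 0 ≤ muSp n := by unfold muSp; positivity
  have hμ' : muSp n ^ 2 ≤ ((n + 1 : ℝ) ^ 2) ^ 2 :=
    pow_le_pow_left₀ hμ ((Real.sqrt_le_left (by positivity)).1 (sqrt_muSp_le n)) 2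
  have hexp : Real.exp (2 * lam * √(muSp n)) ≤ (Real.exp lam ^ (n + 1)) ^ 2 := by
    rw [← Real.exp_nat_mul, ← Real.exp_nat_mul, Real.exp_le_exp]
    push_cast
    nlinarith [mul_le_mul_of_nonneg_left (sqrt_muSp_le n) hlam]
  have hx' : x ^ 2 ≤ (A * ((n + 1) * r ^ n)) ^ 2 := sq_le_sq' (abs_le.1 hx).1 (abs_le.1 hx).2
  calc _ ≤ ((n + 1 : ℝ) ^ 2) ^ 2 * (Real.exp lam ^ (n + 1)) ^ 2 * (A * ((n + 1) * r ^ n)) ^ 2 := by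
        gcongr
    _ = (Real.exp lam * A) ^ 2 *
        ((n + 1 : ℝ) ^ 6 * (Real.exp lam * r) ^ n * (Real.exp lam * r) ^ n) := by ring
    _ ≤ _ := by
        gcongr _ * (_ * ?_)
        exact pow_le_pow_of_le_one (by positivity) hq hk

theorem exists_gevNormSq_le {lam r : ℝ} (hlam : 0 ≤ lam) (hr : 0 < r)
    (hq : Real.exp lam * r < 1) :
    ∃ S : ℝ, 0 ≤ S ∧ ∀ (u : SphereFun) (A : ℝ),
      (∀ (n : ℕ) (m : ℤ), |m| ≤ n → |coeff u n m| ≤ A * ((n + 1) * r ^ n)) →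
        gevNormSq lam u ≤ ENNReal.ofReal ((S * A) ^ 2) := by
  have hs := summable_pow_mul_geometric_natAbs 6 (by positivity) hq
  set w : ℕ × ℤ → ℝ := fun p =>
    ((p.1 + 1 : ℝ) ^ 6 * (Real.exp lam * r) ^ p.1) * (Real.exp lam * r) ^ p.2.natAbs
  refine ⟨Real.exp lam * √(∑' p, w p), by positivity, fun u A h => ?_⟩
  have hS : (Real.exp lam * √(∑' p, w p) * A) ^ 2 = ∑' p, (Real.exp lam * A) ^ 2 * w p := by
    rw [tsum_mul_left, mul_pow, mul_pow, Real.sq_sqrt (tsum_nonneg fun p => by positivity)]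
    ring
  rw [hS, ENNReal.ofReal_tsum_of_nonneg (fun p => by positivity) (hs.mul_left _)]
  refine ENNReal.tsum_le_tsum fun ⟨n, m⟩ => ?_
  split_ifs with hm
  · refine ENNReal.ofReal_le_ofReal (gevrey_weight_mul_sq_le hlam hr.le hq.le ?_ (h n m hm.2))
    have := hm.2
    rw [← Int.natCast_natAbs] at this
    exact_mod_cast this
  · exact zero_le

theorem exp_one_mul_inv_lt_one : Real.exp 1 * 16⁻¹ < 1 := by
  linarith [Real.exp_one_lt_d9]

namespace ConvAlg

variable {ε : ℝ}

theorem realAnalyticSphere_toSphere (hε : |ε| ≤ 1 / 4096) (a : ConvAlg (ℕ × ℕ)) :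
    RealAnalyticSphere (toSphere ε a) := by
  obtain ⟨S, -, hS⟩ := exists_gevNormSq_le zero_le_one (by positivity) exp_one_mul_inv_lt_one
  refine ⟨1, one_pos, (hS _ (2 * Real.pi ^ 2 * ‖a‖) fun n m _ => ?_).trans_lt ENNReal.ofReal_lt_top⟩
  refine (abs_coeff_toSphere_le hε a n m).trans_eq ?_
  rw [inv_pow]
  ring

theorem abs_coeff_zonal_sub_streamSeries_le (hε : |ε| ≤ 1 / 4096) (G B : ℝ)
    (x : ConvAlg (ℕ × ℕ)) (n : ℕ) (m : ℤ) :
    |coeff (fun θ φ => G * Real.cos θ + B * (3 * Real.cos θ ^ 2 - 1)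
      - toSphere ε (streamSeries G B ε x) θ φ) n m| ≤
      (2 * Real.pi ^ 2 * (4096 + ‖shellResolvent x‖) * |ε|) * ((n + 1) * 16⁻¹ ^ n) := by
  have hε' : |ε| < 1 := hε.trans_lt (by norm_num)
  obtain ⟨L, hL⟩ := exists_coeff_toSphere_eq hε' n m
  have h : (fun θ φ => G * Real.cos θ + B * (3 * Real.cos θ ^ 2 - 1)
      - toSphere ε (streamSeries G B ε x) θ φ)
      = toSphere ε ((-1 : ℝ) • single (0, 1) + (-ε) • shellResolvent x) := by
    ext θ φ
    rw [streamSeries, toSphere_add, toSphere_profile_sub_smul_one hε', toSphere_add,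
      toSphere_smul, toSphere_smul, toSphere_smul, toSphere_single hε']
    ring
  have h₁ := abs_coeff_toSphere_single_le hε' (0, 1) n m
  have h₂ := abs_coeff_toSphere_le hε (shellResolvent x) n m
  rw [hL] at h₁ h₂
  rw [h, hL, map_add, map_smul, map_smul, smul_eq_mul, smul_eq_mul]
  refine (abs_add_le _ _).trans ?_
  rw [abs_mul, abs_mul, abs_neg, abs_neg, abs_one, one_mul, inv_pow]
  calc _ ≤ (4096 * |ε|) ^ 1 * ((n + 1) / 16 ^ n * (2 * Real.pi ^ 2))
        + |ε| * ((n + 1) / 16 ^ n * (2 * Real.pi ^ 2) * ‖shellResolvent x‖) := by gcongr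
    _ = _ := by ring

theorem exists_gevNormSq_zonal_sub_streamSeries_le :
    ∃ K : ℝ, 0 ≤ K ∧ ∀ (G B ε : ℝ) (x : ConvAlg (ℕ × ℕ)), |ε| ≤ 1 / 4096 →
      gevNormSq 1 (fun θ φ => G * Real.cos θ + B * (3 * Real.cos θ ^ 2 - 1)
        - toSphere ε (streamSeries G B ε x) θ φ) ≤
          ENNReal.ofReal ((K * (1 + ‖x‖) * |ε|) ^ 2) := by
  obtain ⟨S, hS₀, hS⟩ := exists_gevNormSq_le zero_le_one (by positivity) exp_one_mul_inv_lt_one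
  refine ⟨S * (2 * Real.pi ^ 2 * (4096 + ‖shellResolvent‖)), by positivity,
    fun G B ε x hε => ?_⟩
  refine (hS _ _ fun n m _ => abs_coeff_zonal_sub_streamSeries_le hε G B x n m).trans ?_
  refine ENNReal.ofReal_le_ofReal (pow_le_pow_left₀ (by positivity) ?_ 2)
  have hx : 4096 + ‖shellResolvent x‖ ≤ (4096 + ‖shellResolvent‖) * (1 + ‖x‖) := by
    nlinarith [shellResolvent.le_opNorm x, norm_nonneg x, norm_nonneg shellResolvent]
  calc _ ≤ S * (2 * Real.pi ^ 2 * ((4096 + ‖shellResolvent‖) * (1 + ‖x‖)) * |ε|) := by gcongr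
    _ = _ := by ring

/-! ### Second-order asymptotics of the coefficients -/

theorem coeff_toSphere_profile_two (hε : |ε| < 1) (G B : ℝ) {n : ℕ} (hn : 2 < n) :
    coeff (toSphere ε (profile G B - B • 1)) n 2 = 0 := by
  obtain ⟨L, hL⟩ := exists_coeff_toSphere_eq hε n 2
  have h (p : ℕ × ℕ) (hp : degree p ≤ 2) : L (single p) = 0 := by
    rw [← hL, coeff_toSphere_single_eq_zero hε (hp.trans_lt hn)]
  rw [hL, profile_sub_smul_one]
  simp [h (1, 0), h (2, 0), h (0, 1), h 0, degree]

theorem exists_abs_coeff_streamSeries_two_sub_le {n : ℕ} (hn : 2 < n) :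
    ∃ K : ℝ, 0 ≤ K ∧ ∀ (G B ε : ℝ) (x x₀ : ConvAlg (ℕ × ℕ)), |ε| ≤ 1 / 4096 →
      |coeff (toSphere ε (streamSeries G B ε x)) n 2
        - Real.pi * ynmConst n 2 * legMoment n 1 (shellResolvent x₀) * ε ^ 2| ≤
          K * (|ε| * ‖x‖ + ‖x - x₀‖) * ε ^ 2 := by
  set c : ℝ := 4096 ^ 2 * ((n + 1) / 16 ^ n * (2 * Real.pi ^ 2)) * ‖shellResolvent‖
  set Λ : ConvAlg (ℕ × ℕ) →L[ℝ] ℝ :=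
    (Real.pi * ynmConst n 2) • (legMoment n 1).comp shellResolvent
  refine ⟨c + ‖Λ‖, by positivity, fun G B ε x x₀ hε => ?_⟩
  have hε' : |ε| < 1 := hε.trans_lt (by norm_num)
  obtain ⟨L, hL⟩ := exists_coeff_toSphere_eq hε' n 2
  have hprof := coeff_toSphere_profile_two hε' G B hn
  have h₁ : |L (shellResolvent x) - ε * Λ x| ≤ c * ε ^ 2 * ‖x‖ := by
    have h := abs_coeff_toSphere_two_sub_le hε (shellResolvent x) n
    rw [hL] at h
    refine h.trans ?_
    calc _ ≤ (4096 * ε) ^ 2 * ((n + 1) / 16 ^ n * (2 * Real.pi ^ 2)) *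
          (‖shellResolvent‖ * ‖x‖) := by
          gcongr
          exact shellResolvent.le_opNorm x
      _ = _ := by ring
  have h₂ : |Λ (x - x₀)| ≤ ‖Λ‖ * ‖x - x₀‖ := Λ.le_opNorm _
  rw [hL] at hprof
  rw [hL, streamSeries, map_add, hprof, map_smul, zero_add, smul_eq_mul]
  calc |ε * L (shellResolvent x) - Λ x₀ * ε ^ 2|
      = |ε * (L (shellResolvent x) - ε * Λ x) + ε ^ 2 * Λ (x - x₀)| := by
        rw [map_sub]
        ring_nf
    _ ≤ |ε| * (c * ε ^ 2 * ‖x‖) + ε ^ 2 * (‖Λ‖ * ‖x - x₀‖) := by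
        refine (abs_add_le _ _).trans ?_
        rw [abs_mul, abs_mul, abs_sq]
        gcongr
    _ ≤ (c + ‖Λ‖) * (|ε| * ‖x‖ + ‖x - x₀‖) * ε ^ 2 := by
        have h₃ : 0 ≤ c * ‖x - x₀‖ + ‖Λ‖ * (|ε| * ‖x‖) := by positivity
        nlinarith [mul_nonneg h₃ (sq_nonneg ε)]

end ConvAlg

/-! ### Nontriviality -/

theorem coeff_congr {u v : SphereFun} (h : ∀ θ ∈ Set.Icc (0 : ℝ) Real.pi, ∀ φ, u θ φ = v θ φ)
    (n : ℕ) (m : ℤ) : coeff u n m = coeff v n m := by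
  refine intervalIntegral.integral_congr fun φ _ => intervalIntegral.integral_congr fun θ hθ => ?_
  rw [Set.uIcc_of_le Real.pi_pos.le] at hθ
  simp only [h θ hθ φ]

theorem coeff_sub_sum {ι : Type*} {u : SphereFun} {v : ι → SphereFun}
    (hu : Continuous (Function.uncurry u)) (hv : ∀ i, Continuous (Function.uncurry (v i)))
    (s : Finset ι) (c : ι → ℝ) (n : ℕ) (m : ℤ) :
    coeff (fun θ φ => u θ φ - ∑ i ∈ s, c i * v i θ φ) n m
      = coeff u n m - ∑ i ∈ s, c i * coeff (v i) n m := by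
  have hg : Continuous fun q : ℝ × ℝ => (u q.1 q.2, fun i : s => v i q.1 q.2) := by fun_prop
  obtain ⟨w, hw⟩ := exists_coeff_clm_eq hg n m
  let fst : ℝ × (s → ℝ) →L[ℝ] ℝ := .fst ℝ ℝ _
  let proj (i : s) : ℝ × (s → ℝ) →L[ℝ] ℝ := (ContinuousLinearMap.proj i).comp (.snd ℝ ℝ _)
  have h := hw (fst - ∑ i : s, c i • proj i)
  have hfst : coeff u n m = fst w := hw fst
  have hproj (i : s) : coeff (v i) n m = proj i w := hw (proj i)
  rw [hfst, ← Finset.sum_coe_sort s]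
  simp only [hproj, ← Finset.sum_coe_sort s]
  simpa [fst, proj] using h

theorem coeff_zonal_eq_zero (f : ℝ → ℝ) (n : ℕ) {m : ℤ} (hm : m ≠ 0) :
    coeff (fun θ _ => f θ) n m = 0 := by
  have h := coeff_mul_eq f (fun φ => Real.cos (2 * φ) ^ 0) n m
  rw [integral_cos_two_mul_pow_mul_azimuthal (.inr (by simpa)), mul_zero] at h
  simpa using h

theorem polarFactor_two_two (θ : ℝ) : polarFactor 2 2 θ = 24 * ynmConst 2 2 * Real.sin θ ^ 2 := by
  rw [polarFactor, legDeriv_two_two, sq_abs, Polynomial.eval_ofNat]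
  ring

theorem coeff_Ynm_two_two_eq_zero {n : ℕ} (hn : 2 < n) (m : ℤ) : coeff (Ynm 2 m) n 2 = 0 := by
  have hsep : Ynm 2 m = fun θ φ => polarFactor 2 m.natAbs θ * azimuthal m φ :=
    funext₂ (Ynm_eq_polarFactor_mul_azimuthal 2 m)
  rw [hsep]
  rcases eq_or_ne m 0 with rfl | hm₀
  · simpa [azimuthal] using coeff_zonal_eq_zero (polarFactor 2 0) n two_ne_zero
  rw [coeff_mul_eq]
  by_cases hm : m.natAbs = 2
  · have h := integral_polarFactor_eq_zero (i := 0) (j := 1) le_rfl hn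
    have hpolar (θ : ℝ) : polarFactor 2 2 θ * polarFactor n 2 θ * Real.sin θ
        = 24 * ynmConst 2 2
          * (Real.cos θ ^ 0 * Real.sin θ ^ (2 * 1) * polarFactor n (2 * 1) θ * Real.sin θ) := by
      rw [polarFactor_two_two]
      ring
    simp only [hm, show (2 : ℤ).natAbs = 2 from rfl, hpolar, intervalIntegral.integral_const_mul, h,
      mul_zero, zero_mul]
  · have h := integral_cos_two_mul_pow_mul_azimuthal (j := 1) (m := m) (by grind)
    have hazim (φ : ℝ) : azimuthal m φ * azimuthal 2 φ = Real.cos (2 * φ) ^ 1 * azimuthal m φ := by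
      rw [show azimuthal 2 φ = Real.cos (2 * φ) by simp [azimuthal]]
      ring
    simp only [hazim, h, mul_zero]

theorem sphNontrivial_of_coeff_ne_zero {u : SphereFun} (hu : Continuous (Function.uncurry u))
    {n : ℕ} (hn : 2 < n) (h : coeff u n 2 ≠ 0) : SphNontrivial u := by
  rintro ⟨z, c, hz, hu_eq⟩
  refine h ?_
  have hsub := coeff_sub_sum hu (continuous_Ynm 2) (Finset.Icc (-2) 2) c n 2
  simp only [coeff_Ynm_two_two_eq_zero hn, mul_zero, Finset.sum_const_zero, sub_zero] at hsub
  rw [← hsub, ← coeff_zonal_eq_zero (fun θ => z θ 0) n two_ne_zero]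
  refine coeff_congr (fun θ hθ φ => ?_) n 2
  rw [hu_eq θ hθ φ, add_sub_cancel_right, hz θ φ 0]

theorem SphNontrivial.not_zonalOn {u : SphereFun} (h : SphNontrivial u) : ¬ ZonalOn u := by
  intro hz
  refine h ⟨fun θ _ => u θ 0, 0, fun _ _ _ => rfl, fun θ hθ φ => ?_⟩
  simp [hz θ hθ φ 0]

/-! ### The family of steady solutions -/

theorem ynmConst_two_pos (n : ℕ) : 0 < ynmConst n 2 := by
  unfold ynmConst
  positivity

theorem ne_zero_of_abs_add_mul_sq_le {c t M ε : ℝ} (hε : 0 < ε)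
    (h : |c + t * ε ^ 2| ≤ M * ε ^ 3) (ht : M * ε < |t|) : c ≠ 0 := by
  rintro rfl
  rw [zero_add, abs_mul, abs_sq] at h
  nlinarith [mul_lt_mul_of_pos_right ht (pow_pos hε 2)]

theorem norm_le_of_norm_sub_le {E : Type*} [SeminormedAddCommGroup E] {x x₀ : E} {C ε : ℝ}
    (hε : |ε| ≤ 1) (h : ‖x - x₀‖ ≤ C * |ε|) : ‖x‖ ≤ ‖x₀‖ + |C| := by
  have hC : C * |ε| ≤ |C| * 1 := by
    gcongr
    exact le_abs_self C
  linarith [norm_le_norm_add_norm_sub' x x₀]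

namespace ConvAlg

theorem exists_gevNormSq_zonal_sub_streamSeries_le_of_near (x₀ : ConvAlg (ℕ × ℕ)) (C : ℝ) :
    ∃ K, 0 ≤ K ∧ ∀ G B ε x, |ε| ≤ 1 / 4096 → ‖x - x₀‖ ≤ C * |ε| →
      gevNormSq 1 (fun θ φ => G * Real.cos θ + B * (3 * Real.cos θ ^ 2 - 1)
        - toSphere ε (streamSeries G B ε x) θ φ) ≤ ENNReal.ofReal ((K * |ε|) ^ 2) := by
  obtain ⟨K, hK, hgev⟩ := exists_gevNormSq_zonal_sub_streamSeries_le
  refine ⟨K * (1 + (‖x₀‖ + |C|)), by positivity, fun G B ε x hε hx => (hgev G B ε x hε).trans ?_⟩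
  gcongr
  exact norm_le_of_norm_sub_le (hε.trans (by norm_num)) hx

theorem exists_abs_coeff_streamSeries_two_add_le {n : ℕ} (hn : 2 < n) {t : ℝ}
    {x₀ : ConvAlg (ℕ × ℕ)} (C : ℝ)
    (ht : legMoment n 1 (shellResolvent x₀) = -t / (Real.pi * ynmConst n 2)) :
    ∃ K, 0 ≤ K ∧ ∀ G B ε x, |ε| ≤ 1 / 4096 → ‖x - x₀‖ ≤ C * |ε| →
      |coeff (toSphere ε (streamSeries G B ε x)) n 2 + t * ε ^ 2| ≤ K * |ε| ^ 3 := by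
  obtain ⟨K, hK, hcoeff⟩ := exists_abs_coeff_streamSeries_two_sub_le hn
  refine ⟨K * (‖x₀‖ + |C| + |C|), by positivity, fun G B ε x hε hx => ?_⟩
  have hc : Real.pi * ynmConst n 2 ≠ 0 := (mul_pos Real.pi_pos (ynmConst_two_pos n)).ne'
  have hnorm : ‖x‖ ≤ ‖x₀‖ + |C| := norm_le_of_norm_sub_le (hε.trans (by norm_num)) hx
  have hx' : ‖x - x₀‖ ≤ |C| * |ε| := hx.trans (by gcongr; exact le_abs_self C)
  have h := hcoeff G B ε x x₀ hε
  rw [ht, mul_div_cancel₀ _ hc, neg_mul, sub_neg_eq_add] at h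
  calc |coeff (toSphere ε (streamSeries G B ε x)) n 2 + t * ε ^ 2|
      ≤ K * (|ε| * ‖x‖ + ‖x - x₀‖) * ε ^ 2 := h
    _ ≤ K * (|ε| * (‖x₀‖ + |C|) + |C| * |ε|) * |ε| ^ 2 := by
        rw [sq_abs]
        gcongr
    _ = K * (‖x₀‖ + |C| + |C|) * |ε| ^ 3 := by ring

theorem exists_steady_toSphere_near {G B t₄ t₆ : ℝ} (hGB : 0 < G ^ 2 + B ^ 2)
    (ht₆ : B = 0 → t₆ = 0) :
    ∃ M ε₀ : ℝ, 0 < M ∧ 0 < ε₀ ∧ ε₀ ≤ 1 / 4096 ∧ ∀ ε, 0 < ε → ε ≤ ε₀ →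
      ∃ (a : ConvAlg (ℕ × ℕ)) (F : ℝ → ℝ), (∀ t, AnalyticAt ℝ F t) ∧
        (∀ θ, Real.sin θ ≠ 0 → ∀ φ,
          lapS (toSphere ε a) θ φ - 4 * G * Real.cos θ = F (toSphere ε a θ φ)) ∧
        gevNormSq 1 (fun θ φ => G * Real.cos θ + B * (3 * Real.cos θ ^ 2 - 1) - toSphere ε a θ φ)
          ≤ ENNReal.ofReal ((M * ε) ^ 2) ∧
        |coeff (toSphere ε a) 6 2 + t₆ * ε ^ 2| ≤ M * ε ^ 3 ∧
        |coeff (toSphere ε a) 4 2 + t₄ * ε ^ 2| ≤ M * ε ^ 3 := by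
  obtain ⟨x₀, C, r, hr, h₄, h₆, hx⟩ := exists_steady_series_near
    (t₄ := -t₄ / (Real.pi * ynmConst 4 2)) (t₆ := -t₆ / (Real.pi * ynmConst 6 2)) hGB
    (by simp +contextual [ht₆])
  obtain ⟨K₂, hK₂, hgev⟩ := exists_gevNormSq_zonal_sub_streamSeries_le_of_near x₀ C
  obtain ⟨K₄, hK₄, hcoeff₄⟩ := exists_abs_coeff_streamSeries_two_add_le (by norm_num) C h₄
  obtain ⟨K₆, hK₆, hcoeff₆⟩ := exists_abs_coeff_streamSeries_two_add_le (by norm_num) C h₆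
  refine ⟨K₂ + K₄ + K₆ + 1, min r (1 / 4096), by positivity, by positivity,
    min_le_right _ _, fun ε hε hle => ?_⟩
  rw [← abs_of_pos hε] at hle
  have hε' : |ε| ≤ 1 / 4096 := hle.trans (min_le_right _ _)
  obtain ⟨x, F, hxC, hF, heq⟩ := hx ε (hle.trans (min_le_left _ _))
  refine ⟨streamSeries G B ε x, F, hF, heq, (hgev G B ε x hε' hxC).trans ?_,
    (hcoeff₆ G B ε x hε' hxC).trans ?_, (hcoeff₄ G B ε x hε' hxC).trans ?_⟩
  all_goals
    rw [abs_of_pos hε]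
    gcongr
    linarith

end ConvAlg

open ConvAlg in
theorem exists_steady_family {G B t₄ t₆ : ℝ} (hGB : 0 < G ^ 2 + B ^ 2) (ht₆ : B = 0 → t₆ = 0)
    (hne : t₄ ≠ 0 ∨ t₆ ≠ 0) :
    ∃ M ε₀ : ℝ, 0 < M ∧ 0 < ε₀ ∧ ∀ ε, 0 < ε → ε ≤ ε₀ →
      ∃ (Ψ : SphereFun) (F : ℝ → ℝ), SphSmooth Ψ ∧ PeriodicPhi Ψ ∧ RealAnalyticSphere Ψ ∧
        (∀ t, AnalyticAt ℝ F t) ∧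
        (∀ θ ∈ Set.Ioo 0 Real.pi, ∀ φ, lapS Ψ θ φ - 4 * G * Real.cos θ = F (Ψ θ φ)) ∧
        gevNormSq 1 (fun θ φ => G * Real.cos θ + B * (3 * Real.cos θ ^ 2 - 1) - Ψ θ φ)
          ≤ ENNReal.ofReal ((M * ε) ^ 2) ∧
        |coeff Ψ 6 2 + t₆ * ε ^ 2| ≤ M * ε ^ 3 ∧ |coeff Ψ 4 2 + t₄ * ε ^ 2| ≤ M * ε ^ 3 ∧
        SphNontrivial Ψ := by
  obtain ⟨M, ε₁, hM, hε₁, hε₁', h⟩ := exists_steady_toSphere_near (t₄ := t₄) hGB ht₆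
  have hmax : 0 < max |t₄| |t₆| := by simpa using hne
  refine ⟨M, min ε₁ (max |t₄| |t₆| / (2 * M)), hM, by positivity, fun ε hε hle => ?_⟩
  have hle₁ : ε ≤ ε₁ := hle.trans (min_le_left _ _)
  have hlt : M * ε < max |t₄| |t₆| := by
    have := (le_div_iff₀ (by positivity)).1 (hle.trans (min_le_right _ _))
    linarith
  have hε₂ : |ε| ≤ 1 / 4096 := (abs_of_pos hε).trans_le (hle₁.trans hε₁')
  obtain ⟨a, F, hF, heq, hgev, h₆, h₄⟩ := h ε hε hle₁
  have hsmooth : SphSmooth (toSphere ε a) := sphSmooth_toSphere (hε₂.trans_lt (by norm_num)) a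
  have hnontrivial : SphNontrivial (toSphere ε a) := by
    rcases lt_max_iff.1 hlt with hlt | hlt
    · exact sphNontrivial_of_coeff_ne_zero hsmooth.continuous (by norm_num)
        (ne_zero_of_abs_add_mul_sq_le hε h₄ hlt)
    · exact sphNontrivial_of_coeff_ne_zero hsmooth.continuous (by norm_num)
        (ne_zero_of_abs_add_mul_sq_le hε h₆ hlt)
  exact ⟨toSphere ε a, F, hsmooth, periodicPhi_toSphere ε a, realAnalyticSphere_toSphere hε₂ a, hF,
    fun θ hθ φ => heq θ (Real.sin_pos_of_mem_Ioo hθ).ne' φ, hgev, h₆, h₄, hnontrivial⟩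

theorem Ynm_one_zero (θ φ : ℝ) : Ynm 1 0 θ φ = √(3 / (4 * Real.pi)) * Real.cos θ := by
  have hpoly : legDeriv 1 0 = 2 * Polynomial.X := by
    simpa [legDeriv] using one_add_one_eq_two
  have hconst : ynmConst 1 0 = √(3 / (4 * Real.pi)) / 2 := by norm_num [ynmConst]
  rw [Ynm_eq_polarFactor_mul_azimuthal, polarFactor, Int.natAbs_zero, hpoly, hconst]
  simp [azimuthal, ← mul_assoc]

theorem Ynm_two_zero (θ φ : ℝ) :
    Ynm 2 0 θ φ = √(5 / (4 * Real.pi)) / 2 * (3 * Real.cos θ ^ 2 - 1) := by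
  have hconst : ynmConst 2 0 = √(5 / (4 * Real.pi)) / 8 := by norm_num [ynmConst]
  have hazim : azimuthal 0 φ = 1 := by simp [azimuthal]
  have heval : (12 * Polynomial.X ^ 2 - 4 : Polynomial ℝ).eval (Real.cos θ)
      = 12 * Real.cos θ ^ 2 - 4 := by simp
  rw [Ynm_eq_polarFactor_mul_azimuthal, polarFactor, Int.natAbs_zero, legDeriv_two_zero, hconst,
    hazim, heval]
  ring

theorem sq_mul_add_sq_mul_pos {a b β γ : ℝ} (h : 0 < β ^ 2 + γ ^ 2) (ha : a ≠ 0) (hb : b ≠ 0) :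
    0 < (γ * a) ^ 2 + (β * b) ^ 2 := by
  rcases eq_or_ne β 0 with rfl | hβ
  · have hγ : γ ≠ 0 := by
      rintro rfl
      simp at h
    positivity
  · positivity

theorem leadingCoeff_ne_zero {β γ : ℝ} (h : 0 < β ^ 2 + γ ^ 2) :
    (1 / 14) * ((3 * √3 / (154 * Real.pi)) * (11 * γ ^ 2 - 5 * β ^ 2)
        - β ^ 2 * (1 / (7 * Real.pi)) * (30 * γ ^ 2 / (7 * γ ^ 2 + 15 * β ^ 2))) ≠ 0 ∨
      β ^ 2 * (1 / 36) * (45 / (11 * Real.pi * √182)) ≠ 0 := by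
  rcases eq_or_ne β 0 with rfl | hβ
  · have hγ : γ ≠ 0 := by
      rintro rfl
      simp at h
    left
    simpa [Real.pi_ne_zero]
  · right
    positivity

/-- Near the zonal Rossby–Haurwitz stream function `βY₂⁰ + γY₁⁰`
there exist real-analytic, non-zonal, non-trivial steady solutions of the Euler
equations on the `γ`-rotating sphere, arbitrarily close in the Gevrey norm. -/
theorem nonzonal_steady_near_RossbyHaurwitz (β γ : ℝ) (hβγ : 0 < β^2 + γ^2) :
    ∃ (cgb lam M ε₀ : ℝ), 0 < cgb ∧ 0 < lam ∧ 0 < M ∧ 0 < ε₀ ∧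
      ∀ ε : ℝ, 0 < ε → ε ≤ ε₀ →
        ∃ (Ψ : SphereFun) (F : ℝ → ℝ),
          SphSmooth Ψ ∧ PeriodicPhi Ψ ∧
          RealAnalyticSphere Ψ ∧ (∀ x : ℝ, AnalyticAt ℝ F x) ∧
          (∀ θ ∈ Set.Ioo (0:ℝ) Real.pi, ∀ φ : ℝ,
            lapS Ψ θ φ - 4*γ*Ynm 1 0 θ φ = F (Ψ θ φ)) ∧
          gevNormSq lam (fun θ φ => β*Ynm 2 0 θ φ + γ*Ynm 1 0 θ φ - Ψ θ φ)
            ≤ ENNReal.ofReal ((M*ε)^2) ∧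
          |coeff Ψ 6 2 + β^2 * (1/36) * (45/(11*Real.pi*Real.sqrt 182)) * cgb * ε^2|
            ≤ M*ε^3 ∧
          |coeff Ψ 4 2 + (1/14) * ((3*Real.sqrt 3/(154*Real.pi))*(11*γ^2 - 5*β^2)
              - β^2 * (1/(7*Real.pi)) * (30*γ^2/(7*γ^2+15*β^2))) * cgb * ε^2|
            ≤ M*ε^3 ∧
          ¬ ZonalOn Ψ ∧ SphNontrivial Ψ := by
  set G := γ * √(3 / (4 * Real.pi))
  set B := β * (√(5 / (4 * Real.pi)) / 2)
  have hB : B = 0 ↔ β = 0 := mul_eq_zero_iff_right (by positivity)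
  have hGB : 0 < G ^ 2 + B ^ 2 := sq_mul_add_sq_mul_pos hβγ (by positivity) (by positivity)
  obtain ⟨M, ε₀, hM, hε₀, h⟩ := exists_steady_family hGB
    (fun h => by simp [hB.1 h]) (leadingCoeff_ne_zero hβγ)
  refine ⟨1, 1, M, ε₀, one_pos, one_pos, hM, hε₀, fun ε hε hle => ?_⟩
  obtain ⟨Ψ, F, hsmooth, hperiodic, hanalytic, hF, hsteady, hgev, h₆, h₄, hnontrivial⟩ := h ε hε hle
  refine ⟨Ψ, F, hsmooth, hperiodic, hanalytic, hF, fun θ hθ φ => ?_, ?_, by rwa [mul_one],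
    by rwa [mul_one], hnontrivial.not_zonalOn, hnontrivial⟩
  · rw [← hsteady θ hθ φ, Ynm_one_zero]
    ring
  · convert hgev using 4
    rw [Ynm_one_zero, Ynm_two_zero]
    ring
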